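/- For strict partitions μ ⊆ λ of lengths p and q, the generalized Q-function satisfies the Józefiak–Pragacz–Nimmo type Pfaffian identity: Q_{λ/μ}(X, Y) = Pf of the antisymmetric block matrix with upper-left block ( Q_{(λ_i, λ_j)}(X, Y) )_{1 ≤ i,j ≤ l}, upper-right block ( Q_{(λ_i − μ_{m−k+1})}(τ^{μ_{m−k+1}}(X, Y)) )_{1 ≤ i ≤ l, 1 ≤ k ≤ m}, lower-left block the negative transpose of the upper-right, and lower-right zero block, where l = p or p+1 according as p+q is even or odd, m = q, Q_{(λ_i,λ_j)} is antisymmetrized as in the row-based identity, and Q_{(λ_i − μ_j)}(τ^{μ_j}(X,Y)) = 1 if λ_i = μ_j and = 0 if λ_i < μ_j. -/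

import Mathlib

open Finset
open scoped Classical


/-- Content of a box `(i,j)` is `j - i`. -/
def content (p : ℕ × ℕ) : ℤ := (p.2 : ℤ) - (p.1 : ℤ)

/-- Boxes of the shifted skew diagram of strict partitions `lam/mu` (0-indexed):
row `i < l` occupies columns `i + mu i ≤ j < i + lam i`. -/
def shiftedCells (lam mu : ℕ → ℕ) (l : ℕ) : Finset (ℕ × ℕ) :=
  (Finset.range l ×ˢ Finset.range (l + lam 0)).filter fun p =>
    p.1 + mu p.1 ≤ p.2 ∧ p.2 < p.1 + lam p.1

/-- A primed-alphabet entry: `(k, true)` stands for the primed entry `(k+1)'` and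
`(k, false)` for the unprimed entry `k+1`.  `ordE` realizes the total order
`1' < 1 < 2' < 2 < ⋯ < n' < n`. -/
def ordE {n : ℕ} (e : Fin n × Bool) : ℕ := 2 * (e.1 : ℕ) + (if e.2 then 0 else 1)

/-- The ninth variation (generalized) skew Q-function: sum over primed shifted
tableaux on the cell set `C` (entries weakly increasing along rows and columns,
no repeated primed entry in a row, no repeated unprimed entry in a column),
weighting an unprimed entry `k` in a box of content `c` by `X k c` and a primed
entry `k'` by `Y k c`. -/
noncomputable def QGen {R : Type*} [CommRing R] (n : ℕ) (C : Finset (ℕ × ℕ))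
    (X Y : Fin n → ℤ → R) : R :=
  ∑ T ∈ Finset.univ.filter (fun T : {p // p ∈ C} → Fin n × Bool =>
      (∀ p q : {p // p ∈ C}, (q : ℕ × ℕ).1 = (p : ℕ × ℕ).1 ∧
          (q : ℕ × ℕ).2 = (p : ℕ × ℕ).2 + 1 →
          ordE (T p) ≤ ordE (T q) ∧ ¬(T p = T q ∧ (T p).2 = true)) ∧
      (∀ p q : {p // p ∈ C}, (q : ℕ × ℕ).1 = (p : ℕ × ℕ).1 + 1 ∧
          (q : ℕ × ℕ).2 = (p : ℕ × ℕ).2 →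
          ordE (T p) ≤ ordE (T q) ∧ ¬(T p = T q ∧ (T p).2 = false))),
    ∏ p : {p // p ∈ C},
      (if (T p).2 then Y (T p).1 (content (p : ℕ × ℕ)) else X (T p).1 (content (p : ℕ × ℕ)))

/-- Cells of a single row of `r` boxes, with contents `0, 1, …, r-1`. -/
def rowCells (r : ℕ) : Finset (ℕ × ℕ) := (Finset.range r).image fun j => (0, j)

/-- The Pfaffian of a `2m × 2m` matrix, as the sum over perfect matchings
(encoded as permutations `σ` in canonical form) of the sign of `σ` times the
product of the matched entries. -/
noncomputable def pfaffian {R : Type*} [CommRing R] {m : ℕ}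
    (A : Matrix (Fin (2 * m)) (Fin (2 * m)) R) : R :=
  ∑ σ ∈ Finset.univ.filter (fun σ : Equiv.Perm (Fin (2 * m)) =>
      (∀ i : Fin m, σ ⟨2 * (i : ℕ), by have := i.isLt; omega⟩ <
          σ ⟨2 * (i : ℕ) + 1, by have := i.isLt; omega⟩) ∧
      (∀ i j : Fin m, i < j → σ ⟨2 * (i : ℕ), by have := i.isLt; omega⟩ <
          σ ⟨2 * (j : ℕ), by have := j.isLt; omega⟩)),
    (Equiv.Perm.sign σ : ℤ) •
      ∏ i : Fin m, A (σ ⟨2 * (i : ℕ), by have := i.isLt; omega⟩)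
        (σ ⟨2 * (i : ℕ) + 1, by have := i.isLt; omega⟩)

/-- The generalized skew Q-function of the two-row shifted shape `(a, b)`
(for `b = 0`, the one-row shape `(a)`). -/
noncomputable def qTwoRow {R : Type*} [CommRing R] (n a b : ℕ) (X Y : Fin n → ℤ → R) : R :=
  QGen n (shiftedCells (fun i => if i = 0 then a else if i = 1 then b else 0) (fun _ => 0) 2) X Y

/-- `Q_{(r)}(τ^m(X,Y))`: the generalized Q-function of a single row of `r`
boxes whose leftmost box has content `m`; it is `1` for `r = 0` and `0` for
`r < 0`. -/
noncomputable def qRowShift {R : Type*} [CommRing R] (n : ℕ) (r m : ℤ)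
    (X Y : Fin n → ℤ → R) : R :=
  if r < 0 then 0
  else QGen n (rowCells r.toNat) (fun k c => X k (m + c)) (fun k c => Y k (m + c))

/-!
For an alternating bilinear form `B` there is a linear functional on the exterior algebra that sends
`v₁ ∧ ⋯ ∧ v_N` to the Pfaffian of the matrix `B (vᵢ) (vⱼ)`: pass to the Clifford algebra by means
of `B` and take the scalar part.

Removing the boxes of the largest letter from a tableau of shape `λ/μ` leaves a tableau of shape
`ν/μ`, where `ν` is strict and interlaces `λ`, and the total weight of the removed boxes is a
product of coefficients `stepCoeff x y λᵢ λᵢ₊₁ νᵢ` over the rows.  The entries of the matrix, being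
Q-functions with at most two rows, satisfy this recursion too, and it says that the form for `n + 1`
letters is the pullback of the form for `n` letters under
`row a ↦ Γₐ := ∑ c, stepCoeff x y a 0 c • row c`.  For `a > b > 0` the vector
`Γₐ` differs by a multiple of `Γ_b` from the sum of
`stepCoeff x y a b c • row c` over the `c` with `b ≤ c ≤ a`.  Hence the product of the `Γ` over the
parts of `λ` is the product of these truncated sums, which expands into a sum over all `ν`
interlacing `λ`; those that are not strict have a repeated part and contribute `0`.  Thus both sides
satisfy the same recursion in the number of letters.
-/

section Pfaffian

/-- The permutation of `Fin (N + 2)` that fixes `0`, sends `1` to `k + 1`, and acts as `σ` on the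
remaining points up to order preserving relabelling. It adjoins the matched pair `{0, k + 1}` to
a matching of the remaining points. -/
def permInsertPair {N : ℕ} (k : Fin (N + 1)) (σ : Equiv.Perm (Fin N)) :
    Equiv.Perm (Fin (N + 2)) :=
  Equiv.Perm.decomposeFin.symm
    (0, k.cycleRange.symm * Equiv.Perm.decomposeFin.symm (0, σ))

theorem permInsertPair_zero {N : ℕ} (k : Fin (N + 1)) (σ : Equiv.Perm (Fin N)) :
    permInsertPair k σ 0 = 0 := by
  simp [permInsertPair]

theorem permInsertPair_one {N : ℕ} (k : Fin (N + 1)) (σ : Equiv.Perm (Fin N)) :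
    permInsertPair k σ 1 = k.succ := by
  rw [← Fin.succ_zero_eq_one, permInsertPair, Equiv.Perm.decomposeFin_symm_apply_succ]
  simp

theorem permInsertPair_succ_succ {N : ℕ} (k : Fin (N + 1)) (σ : Equiv.Perm (Fin N)) (j : Fin N) :
    permInsertPair k σ j.succ.succ = (k.succAbove (σ j)).succ := by
  rw [permInsertPair, Equiv.Perm.decomposeFin_symm_apply_succ]
  simp

theorem sign_permInsertPair {N : ℕ} (k : Fin (N + 1)) (σ : Equiv.Perm (Fin N)) :
    (Equiv.Perm.sign (permInsertPair k σ) : ℤ) = (-1) ^ (k : ℕ) * Equiv.Perm.sign σ := by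
  simp [permInsertPair, Equiv.Perm.decomposeFin.symm_sign]

theorem exists_permInsertPair {N : ℕ} (σ : Equiv.Perm (Fin (N + 2))) (h : σ 0 = 0) :
    ∃ k τ, permInsertPair k τ = σ := by
  obtain ⟨⟨p, e⟩, rfl⟩ := Equiv.Perm.decomposeFin.symm.surjective σ
  obtain rfl : p = 0 := by simpa using h
  obtain ⟨⟨p', τ⟩, h'⟩ :=
    Equiv.Perm.decomposeFin.symm.surjective ((e 0).cycleRange * e)
  obtain rfl : p' = 0 := by simpa using congrArg (fun f => f 0) h'
  refine ⟨e 0, τ, ?_⟩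
  rw [permInsertPair, h']
  congr 2
  ext x
  simp

theorem permInsertPair_inj {N : ℕ} {k k' : Fin (N + 1)} {σ σ' : Equiv.Perm (Fin N)} :
    permInsertPair k σ = permInsertPair k' σ' ↔ k = k' ∧ σ = σ' := by
  refine ⟨fun h => ?_, fun h => h.1 ▸ h.2 ▸ rfl⟩
  obtain rfl : k = k' := by
    simpa only [permInsertPair_one, Fin.succ_inj] using Equiv.congr_fun h 1
  refine ⟨rfl, Equiv.ext fun j => ?_⟩
  simpa only [permInsertPair_succ_succ, Fin.succ_inj, Fin.succAbove_right_inj] using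
    Equiv.congr_fun h j.succ.succ

/-- The position of the first element of the `i`-th matched pair. -/
def pairFst {m : ℕ} (i : Fin m) : Fin (2 * m) := ⟨2 * i, by omega⟩

/-- The position of the second element of the `i`-th matched pair. -/
def pairSnd {m : ℕ} (i : Fin m) : Fin (2 * m) := ⟨2 * i + 1, by omega⟩

/-- The permutations over which `pfaffian` sums: the canonical forms of the perfect matchings of
`Fin (2 * m)`. -/
def IsMatchingForm {m : ℕ} (σ : Equiv.Perm (Fin (2 * m))) : Prop :=
  (∀ i : Fin m, σ (pairFst i) < σ (pairSnd i)) ∧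
    ∀ i j : Fin m, i < j → σ (pairFst i) < σ (pairFst j)

theorem IsMatchingForm.apply_zero {m : ℕ} {σ : Equiv.Perm (Fin (2 * m + 2))}
    (h : IsMatchingForm (m := m + 1) σ) : σ 0 = 0 := by
  have hfst (i : Fin (m + 1)) : σ 0 ≤ σ (pairFst i) := by
    rcases eq_or_ne i 0 with rfl | hi
    · rfl
    · exact (h.2 0 i (Fin.pos_iff_ne_zero.2 hi)).le
  obtain ⟨⟨x, hx⟩, hσx⟩ := σ.surjective 0
  suffices σ 0 ≤ σ ⟨x, hx⟩ from Fin.le_zero_iff.1 (this.trans_eq hσx)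
  obtain ⟨i, rfl | rfl⟩ := x.even_or_odd'
  · exact hfst ⟨i, by omega⟩
  · exact (hfst ⟨i, by omega⟩).trans (h.1 ⟨i, by omega⟩).le

theorem isMatchingForm_permInsertPair {m : ℕ} (k : Fin (2 * m + 1))
    (τ : Equiv.Perm (Fin (2 * m))) :
    IsMatchingForm (m := m + 1) (permInsertPair k τ) ↔ IsMatchingForm τ := by
  have fst_zero : permInsertPair k τ (pairFst (m := m + 1) 0) = 0 := permInsertPair_zero k τ
  have snd_zero : permInsertPair k τ (pairSnd (m := m + 1) 0) = k.succ := permInsertPair_one k τ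
  have fst_succ (i : Fin m) : permInsertPair k τ (pairFst i.succ) =
      (k.succAbove (τ (pairFst i))).succ := permInsertPair_succ_succ k τ (pairFst i)
  have snd_succ (i : Fin m) : permInsertPair k τ (pairSnd i.succ) =
      (k.succAbove (τ (pairSnd i))).succ := permInsertPair_succ_succ k τ (pairSnd i)
  unfold IsMatchingForm
  refine and_congr ?_ ?_
  · rw [Fin.forall_fin_succ, fst_zero, snd_zero]
    simp only [fst_succ, snd_succ, Fin.succ_lt_succ_iff, Fin.succAbove_lt_succAbove_iff,
      Fin.succ_pos, true_and]
  · simp only [Fin.forall_fin_succ, fst_zero, fst_succ, Fin.succ_lt_succ_iff, Fin.succ_pos,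
      Fin.succAbove_lt_succAbove_iff, Fin.not_lt_zero, false_imp_iff, imp_true_iff,
      true_and]

variable {R : Type*} [CommRing R]

theorem pfaffian_eq_sum_isMatchingForm {m : ℕ} (A : Matrix (Fin (2 * m)) (Fin (2 * m)) R) :
    pfaffian A = ∑ σ : Equiv.Perm (Fin (2 * m)) with IsMatchingForm σ,
      (Equiv.Perm.sign σ : ℤ) • ∏ i : Fin m, A (σ (pairFst i)) (σ (pairSnd i)) := by
  unfold pfaffian
  congr!

theorem pfaffian_congr {m : ℕ} {A B : Matrix (Fin (2 * m)) (Fin (2 * m)) R}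
    (h : ∀ i j, i < j → A i j = B i j) : pfaffian A = pfaffian B := by
  simp only [pfaffian_eq_sum_isMatchingForm]
  refine Finset.sum_congr rfl fun σ hσ => congrArg _ (Finset.prod_congr rfl fun i _ => ?_)
  exact h _ _ ((Finset.mem_filter.1 hσ).2.1 i)

theorem pfaffian_zero (A : Matrix (Fin (2 * 0)) (Fin (2 * 0)) R) : pfaffian A = 1 := by
  have hfilter : Finset.univ.filter (IsMatchingForm (m := 0)) = {1} := by
    ext σ
    simp [IsMatchingForm, Equiv.ext_iff]
  rw [pfaffian_eq_sum_isMatchingForm, hfilter]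
  simp

theorem pfaffian_succ {m : ℕ} (A : Matrix (Fin (2 * m + 2)) (Fin (2 * m + 2)) R) :
    pfaffian (m := m + 1) A = ∑ k : Fin (2 * m + 1), (-1) ^ (k : ℕ) *
      (A 0 k.succ * pfaffian (Matrix.of fun i j : Fin (2 * m) =>
        A (k.succAbove i).succ (k.succAbove j).succ)) := by
  have hterm (k : Fin (2 * m + 1)) (τ : Equiv.Perm (Fin (2 * m))) :
      (Equiv.Perm.sign (permInsertPair k τ) : ℤ) • ∏ i : Fin (m + 1),
        A (permInsertPair k τ (pairFst i)) (permInsertPair k τ (pairSnd i)) =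
      (-1) ^ (k : ℕ) * (A 0 k.succ * ((Equiv.Perm.sign τ : ℤ) • ∏ i : Fin m,
        A (k.succAbove (τ (pairFst i))).succ (k.succAbove (τ (pairSnd i))).succ)) := by
    have h0 : A (permInsertPair k τ (pairFst (m := m + 1) 0))
        (permInsertPair k τ (pairSnd (m := m + 1) 0)) = A 0 k.succ :=
      congrArg₂ A (permInsertPair_zero k τ) (permInsertPair_one k τ)
    have hsucc (i : Fin m) : A (permInsertPair k τ (pairFst i.succ))
        (permInsertPair k τ (pairSnd i.succ)) =
          A (k.succAbove (τ (pairFst i))).succ (k.succAbove (τ (pairSnd i))).succ :=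
      congrArg₂ A (permInsertPair_succ_succ k τ (pairFst i))
        (permInsertPair_succ_succ k τ (pairSnd i))
    rw [Fin.prod_univ_succ, h0, sign_permInsertPair]
    simp only [hsucc, zsmul_eq_mul]
    push_cast
    ring
  simp only [pfaffian_eq_sum_isMatchingForm, Finset.mul_sum, Matrix.of_apply, ← hterm]
  rw [← Finset.sum_product' (s := Finset.univ)]
  symm
  refine Finset.sum_bij (fun x _ => permInsertPair x.1 x.2) ?_ ?_ ?_ fun _ _ => rfl
  · rintro ⟨k, τ⟩ h
    simpa [isMatchingForm_permInsertPair] using h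
  · rintro ⟨k, τ⟩ _ ⟨k', τ'⟩ _ h
    exact Prod.ext_iff.2 (permInsertPair_inj.1 h)
  · intro σ hσ
    have hσ' : IsMatchingForm (m := m + 1) σ := (Finset.mem_filter.1 hσ).2
    obtain ⟨k, τ, rfl⟩ := exists_permInsertPair (N := 2 * m) σ hσ'.apply_zero
    exact ⟨⟨k, τ⟩, by simpa [isMatchingForm_permInsertPair] using hσ', rfl⟩

end Pfaffian

section PfaffianFunctional

variable {R M : Type*} [CommRing R] [AddCommGroup M] [Module R M]

/-- The exterior product of a list of vectors; a list-indexed form of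
`ExteriorAlgebra.ιMulti`. -/
noncomputable def extProd (l : List M) : ExteriorAlgebra R M :=
  (l.map (ExteriorAlgebra.ι R)).prod

theorem extProd_nil : extProd (R := R) ([] : List M) = 1 := rfl

theorem extProd_cons (v : M) (l : List M) :
    extProd (R := R) (v :: l) = ExteriorAlgebra.ι R v * extProd l := by
  simp [extProd]

theorem extProd_append (l l' : List M) :
    extProd (R := R) (l ++ l') = extProd l * extProd l' := by
  simp [extProd]

theorem extProd_mul_ι (l : List M) (v : M) :
    extProd (R := R) l * ExteriorAlgebra.ι R v =
      (-1 : R) ^ l.length • (ExteriorAlgebra.ι R v * extProd l) := by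
  induction l with
  | nil => simp [extProd]
  | cons x l ih =>
    have h : ExteriorAlgebra.ι R x * ExteriorAlgebra.ι R v =
        -(ExteriorAlgebra.ι R v * ExteriorAlgebra.ι R x) :=
      eq_neg_of_add_eq_zero_left (ExteriorAlgebra.ι_add_mul_swap x v)
    rw [extProd_cons, mul_assoc, ih, mul_smul_comm, ← mul_assoc, h, List.length_cons, pow_succ]
    simp [mul_assoc]

theorem extProd_append_cons (l l' : List M) (v : M) :
    extProd (R := R) (l ++ v :: l') =
      (-1 : R) ^ l.length • (ExteriorAlgebra.ι R v * extProd (l ++ l')) := by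
  rw [extProd_append, extProd_cons, ← mul_assoc, extProd_mul_ι, smul_mul_assoc, mul_assoc,
    extProd_append]

/-- Contraction of the exterior algebra by a linear form: `CliffordAlgebra.contractLeft` for the
zero quadratic form. -/
noncomputable def extContract (d : Module.Dual R M) :
    ExteriorAlgebra R M →ₗ[R] ExteriorAlgebra R M :=
  CliffordAlgebra.contractLeft (Q := (0 : QuadraticForm R M)) d

theorem extContract_one (d : Module.Dual R M) : extContract d 1 = 0 :=
  CliffordAlgebra.contractLeft_one (0 : QuadraticForm R M) d

theorem extContract_ι_mul (d : Module.Dual R M) (v : M) (x : ExteriorAlgebra R M) :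
    extContract d (ExteriorAlgebra.ι R v * x) =
      d v • x - ExteriorAlgebra.ι R v * extContract d x :=
  CliffordAlgebra.contractLeft_ι_mul (Q := (0 : QuadraticForm R M)) d v x

theorem extContract_extContract (d : Module.Dual R M) (x : ExteriorAlgebra R M) :
    extContract d (extContract d x) = 0 :=
  CliffordAlgebra.contractLeft_contractLeft (Q := (0 : QuadraticForm R M)) d x

theorem extContract_extProd (d : Module.Dual R M) (l : List M) :
    extContract d (extProd l) = ∑ k : Fin l.length,
      (-1 : R) ^ (k : ℕ) • d (l.get k) • extProd (l.eraseIdx k) := by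
  induction l with
  | nil => simp [extProd, extContract_one]
  | cons x l ih =>
    rw [extProd_cons, extContract_ι_mul, ih]
    simp only [List.length_cons]
    rw [Fin.sum_univ_succ, Finset.mul_sum, sub_eq_add_neg, ← Finset.sum_neg_distrib]
    congr 1
    · simp
    · refine Finset.sum_congr rfl fun k _ => ?_
      simp [extProd_cons, pow_succ]

theorem extContract_extProd_congr {d d' : Module.Dual R M} {l : List M}
    (h : ∀ v ∈ l, d v = d' v) : extContract d (extProd l) = extContract d' (extProd l) := by
  simp only [extContract_extProd]
  exact Finset.sum_congr rfl fun k _ => by rw [h _ (List.get_mem l k)]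

theorem toQuadraticMap_neg_of_isAlt {B : LinearMap.BilinForm R M} (hB : B.IsAlt) :
    LinearMap.BilinMap.toQuadraticMap (-B) = (0 : QuadraticForm R M) - 0 := by
  ext v
  simp [hB v]

/-- For an alternating form `B`, the linear functional on the exterior algebra that sends
`v₁ ∧ ⋯ ∧ v_N` to the Pfaffian of the matrix `B vᵢ vⱼ`: deform the exterior product by `-B` and
take the scalar part. -/
noncomputable def pfFunctional {B : LinearMap.BilinForm R M} (hB : B.IsAlt) :
    ExteriorAlgebra R M →ₗ[R] R :=
  ExteriorAlgebra.algebraMapInv.toLinearMap ∘ₗ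
    CliffordAlgebra.changeForm (toQuadraticMap_neg_of_isAlt hB)

variable {B : LinearMap.BilinForm R M} (hB : B.IsAlt)

theorem pfFunctional_one : pfFunctional hB 1 = 1 :=
  (congrArg ExteriorAlgebra.algebraMapInv (CliffordAlgebra.changeForm_one _)).trans (map_one _)

theorem pfFunctional_ι_mul (v : M) (x : ExteriorAlgebra R M) :
    pfFunctional hB (ExteriorAlgebra.ι R v * x) = pfFunctional hB (extContract (B v) x) := by
  have hQ := toQuadraticMap_neg_of_isAlt hB
  let y : ExteriorAlgebra R M := CliffordAlgebra.changeForm hQ x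
  have hscalar : ExteriorAlgebra.algebraMapInv (ExteriorAlgebra.ι R v * y) = 0 := by
    simp [ExteriorAlgebra.algebraMapInv]
  calc pfFunctional hB (ExteriorAlgebra.ι R v * x)
      = ExteriorAlgebra.algebraMapInv (ExteriorAlgebra.ι R v * y - extContract ((-B) v) y) :=
        congrArg ExteriorAlgebra.algebraMapInv (CliffordAlgebra.changeForm_ι_mul hQ v x)
    _ = ExteriorAlgebra.algebraMapInv (extContract (B v) y) := by
        simp [hscalar, extContract]
    _ = pfFunctional hB (extContract (B v) x) :=
        congrArg ExteriorAlgebra.algebraMapInv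
          (CliffordAlgebra.changeForm_contractLeft hQ (B v) x).symm

theorem pfFunctional_cons (v : M) (l : List M) :
    pfFunctional hB (extProd (v :: l)) = ∑ k : Fin l.length,
      (-1 : R) ^ (k : ℕ) * (B v (l.get k) * pfFunctional hB (extProd (l.eraseIdx k))) := by
  rw [extProd_cons, pfFunctional_ι_mul, extContract_extProd, map_sum]
  simp

theorem pfFunctional_replace {u w : M} {l l' : List M} (h : ∀ v ∈ l ++ l', B u v = B w v) :
    pfFunctional hB (extProd (l ++ u :: l')) = pfFunctional hB (extProd (l ++ w :: l')) := by
  simp only [extProd_append_cons, map_smul, pfFunctional_ι_mul, extContract_extProd_congr h]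

theorem pfFunctional_eq_zero {w : M} {l l' : List M} (h : ∀ v ∈ l ++ l', B w v = 0) :
    pfFunctional hB (extProd (l ++ w :: l')) = 0 := by
  rw [pfFunctional_replace hB (w := 0) fun v hv => by simp [h v hv]]
  simp [extProd_append_cons]

theorem pfFunctional_remove_pair {u w : M} {l l' : List M}
    (h : ∀ v ∈ l ++ l', B u v = B w v) :
    pfFunctional hB (extProd (l ++ u :: w :: l')) =
      B u w * pfFunctional hB (extProd (l ++ l')) := by
  have hmove : extProd (R := R) (l ++ u :: w :: l') =
      ExteriorAlgebra.ι R u * (ExteriorAlgebra.ι R w * extProd (l ++ l')) := by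
    rw [extProd_append_cons, extProd_append_cons, mul_smul_comm, smul_smul, ← mul_pow]
    simp
  rw [hmove, pfFunctional_ι_mul, extContract_ι_mul, map_sub, pfFunctional_ι_mul,
    extContract_extProd_congr h, extContract_extContract, map_zero, sub_zero, map_smul,
    smul_eq_mul]

theorem pfFunctional_congr {M' : Type*} [AddCommGroup M'] [Module R M']
    {B' : LinearMap.BilinForm R M'} (hB' : B'.IsAlt) {I : Type*} {u : I → M} {u' : I → M'}
    (s : List I) (h : s.Pairwise fun i j => B (u i) (u j) = B' (u' i) (u' j)) :
    pfFunctional hB (extProd (s.map u)) = pfFunctional hB' (extProd (s.map u')) := by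
  induction hn : s.length using Nat.strong_induction_on generalizing s with
  | _ n ih =>
    cases s with
    | nil => simp [extProd_nil, pfFunctional_one]
    | cons i s =>
      rw [List.map_cons, List.map_cons, pfFunctional_cons, pfFunctional_cons]
      rw [List.pairwise_cons] at h
      refine Fintype.sum_equiv (finCongr (by simp)) _ _ fun k => ?_
      have hk : (k : ℕ) < s.length := by simpa using k.2
      have hlen : (s.eraseIdx k).length < n := by
        rw [List.length_eraseIdx_of_lt hk, ← hn, List.length_cons]
        omega
      have := ih _ hlen (s.eraseIdx k) (h.2.sublist (List.eraseIdx_sublist _ _)) rfl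
      simp only [List.get_eq_getElem, List.getElem_map, List.eraseIdx_map, finCongr_apply,
        Fin.val_cast, this]
      rw [h.1 _ (List.getElem_mem hk)]

theorem eraseIdx_ofFn {α : Type*} {N : ℕ} (f : Fin (N + 1) → α) (k : Fin (N + 1)) :
    (List.ofFn f).eraseIdx k = List.ofFn fun i => f (k.succAbove i) := by
  refine List.ext_getElem ?_ fun i h₁ h₂ => ?_
  · rw [List.length_eraseIdx_of_lt] <;> simp [Fin.is_le]
  rw [List.getElem_eraseIdx]
  split_ifs with hik
  · rw [List.getElem_ofFn, List.getElem_ofFn,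
      Fin.succAbove_of_castSucc_lt _ _ (by simpa [Fin.lt_def] using hik)]
    rfl
  · rw [List.getElem_ofFn, List.getElem_ofFn,
      Fin.succAbove_of_le_castSucc _ _ (by simpa [Fin.le_def] using hik)]
    rfl

theorem pfaffian_eq_pfFunctional {m : ℕ} (v : Fin (2 * m) → M) :
    pfaffian (Matrix.of fun i j => B (v i) (v j)) = pfFunctional hB (extProd (List.ofFn v)) := by
  induction m with
  | zero => simp [pfaffian_zero, extProd_nil, pfFunctional_one]
  | succ m ih =>
    have hv : List.ofFn v = v (0 : Fin (2 * m + 2)) ::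
        List.ofFn fun i : Fin (2 * m + 1) => v i.succ := List.ofFn_succ
    rw [pfaffian_succ, hv, pfFunctional_cons]
    refine Fintype.sum_equiv (finCongr (by simp)) _ _ fun k => ?_
    have hminor := ih fun i => v (k.succAbove i).succ
    rw [← eraseIdx_ofFn fun i : Fin (2 * m + 1) => v i.succ] at hminor
    simp only [Matrix.of_apply] at hminor ⊢
    rw [hminor, List.get_ofFn]
    simp

end PfaffianFunctional

section Tableaux

/-- The condition that `e` may immediately precede `f` when repetitions of entries with mark `b`
are forbidden: along rows `b = true` (primed entries), along columns `b = false`. -/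
def EntryCompat {n : ℕ} (b : Bool) (e f : Fin n × Bool) : Prop :=
  ordE e ≤ ordE f ∧ ¬(e = f ∧ e.2 = b)

/-- The box `q` is immediately to the right of `p`. -/
def RightOf (p q : ℕ × ℕ) : Prop := q.1 = p.1 ∧ q.2 = p.2 + 1

/-- The box `q` is immediately below `p`. -/
def Below (p q : ℕ × ℕ) : Prop := q.1 = p.1 + 1 ∧ q.2 = p.2

/-- A filling whose entries are compatible (in the sense of `EntryCompat b`) in all pairs of boxes
related by `r`. -/
def CompatAlong {n : ℕ} {C : Finset (ℕ × ℕ)} (r : ℕ × ℕ → ℕ × ℕ → Prop) (b : Bool)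
    (T : {p // p ∈ C} → Fin n × Bool) : Prop :=
  ∀ p q : {p // p ∈ C}, r p q → EntryCompat b (T p) (T q)

/-- Primed shifted tableaux on a set of boxes: the fillings over which `QGen` sums. -/
def IsPrimedTableau {n : ℕ} {C : Finset (ℕ × ℕ)} (T : {p // p ∈ C} → Fin n × Bool) : Prop :=
  CompatAlong RightOf true T ∧ CompatAlong Below false T

/-- The weight of the box `p` filled with the entry `e`. -/
def entryWeight {R : Type*} {n : ℕ} (X Y : Fin n → ℤ → R) (p : ℕ × ℕ) (e : Fin n × Bool) : R :=
  if e.2 then Y e.1 (content p) else X e.1 (content p)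

theorem QGen_eq_sum_isPrimedTableau {R : Type*} [CommRing R] (n : ℕ) (C : Finset (ℕ × ℕ))
    (X Y : Fin n → ℤ → R) :
    QGen n C X Y = ∑ T : {p // p ∈ C} → Fin n × Bool with IsPrimedTableau T,
      ∏ p : {p // p ∈ C}, entryWeight X Y p (T p) := by
  unfold QGen
  congr!

/-- An entry of the alphabet with `n` letters, viewed in the alphabet with `n + 1` letters. -/
def entryCastSucc {n : ℕ} (e : Fin n × Bool) : Fin (n + 1) × Bool := (e.1.castSucc, e.2)

theorem entryCastSucc_injective {n : ℕ} : Function.Injective (entryCastSucc (n := n)) :=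
  Function.Injective.prodMap (Fin.castSucc_injective n) Function.injective_id

theorem ordE_entryCastSucc_lt_last {n : ℕ} (e : Fin n × Bool) (c : Bool) :
    ordE (entryCastSucc e) < ordE (Fin.last n, c) := by
  have := e.1.2
  grind [ordE, entryCastSucc]

theorem entryCompat_entryCastSucc {n : ℕ} {b : Bool} {e f : Fin n × Bool} :
    EntryCompat b (entryCastSucc e) (entryCastSucc f) ↔ EntryCompat b e f := by
  unfold EntryCompat
  rw [entryCastSucc_injective.eq_iff]
  rfl

theorem entryCompat_entryCastSucc_last {n : ℕ} (b : Bool) (e : Fin n × Bool) (c : Bool) :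
    EntryCompat b (entryCastSucc e) (Fin.last n, c) :=
  have h := ordE_entryCastSucc_lt_last e c
  ⟨h.le, fun heq => h.ne (congrArg _ heq.1)⟩

theorem entryCompat_true_last {n : ℕ} {c c' : Bool} :
    EntryCompat true (Fin.last n, c) (Fin.last n, c') ↔ c' = false := by
  cases c <;> cases c' <;> simp [EntryCompat, ordE]

theorem entryCompat_false_last {n : ℕ} {c c' : Bool} :
    EntryCompat false (Fin.last n, c) (Fin.last n, c') ↔ c = true := by
  cases c <;> cases c' <;> simp [EntryCompat, ordE]

/-- `D` contains, with each of its boxes, the boxes of `C` that precede it along `r`. -/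
def IsLowerAlong (r : ℕ × ℕ → ℕ × ℕ → Prop) (C D : Finset (ℕ × ℕ)) : Prop :=
  ∀ p ∈ C, ∀ q ∈ D, r p q → p ∈ D

/-- `D` is closed under moving left or up inside `C`. -/
def IsLowerIn (C D : Finset (ℕ × ℕ)) : Prop :=
  IsLowerAlong RightOf C D ∧ IsLowerAlong Below C D

/-- Combine a filling of `D` with primed or unprimed largest letters on the rest of `C`. -/
def glueTableau {n : ℕ} {C D : Finset (ℕ × ℕ)} (T : {p // p ∈ D} → Fin n × Bool)
    (U : {p // p ∈ C \ D} → Bool) (p : {p // p ∈ C}) : Fin (n + 1) × Bool :=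
  if h : (p : ℕ × ℕ) ∈ D then entryCastSucc (T ⟨p, h⟩)
  else (Fin.last n, U ⟨p, Finset.mem_sdiff.2 ⟨p.2, h⟩⟩)

theorem glueTableau_of_mem {n : ℕ} {C D : Finset (ℕ × ℕ)} (T : {p // p ∈ D} → Fin n × Bool)
    (U : {p // p ∈ C \ D} → Bool) {p : {p // p ∈ C}} (hp : (p : ℕ × ℕ) ∈ D) :
    glueTableau T U p = entryCastSucc (T ⟨p, hp⟩) :=
  dif_pos hp

theorem glueTableau_of_notMem {n : ℕ} {C D : Finset (ℕ × ℕ)} (T : {p // p ∈ D} → Fin n × Bool)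
    (U : {p // p ∈ C \ D} → Bool) {p : {p // p ∈ C}} (hp : (p : ℕ × ℕ) ∉ D) :
    glueTableau T U p = (Fin.last n, U ⟨p, Finset.mem_sdiff.2 ⟨p.2, hp⟩⟩) :=
  dif_neg hp

/-- The markings (`true` for primed) with which a set of boxes can be filled by a single
letter. -/
def IsStripFilling {S : Finset (ℕ × ℕ)} (U : {p // p ∈ S} → Bool) : Prop :=
  (∀ p q : {p // p ∈ S}, RightOf p q → U q = false) ∧
    ∀ p q : {p // p ∈ S}, Below p q → U p = true

theorem compatAlong_glueTableau {n : ℕ} {C D : Finset (ℕ × ℕ)} {r : ℕ × ℕ → ℕ × ℕ → Prop}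
    {b : Bool} (hDC : D ⊆ C) (hD : IsLowerAlong r C D) (T : {p // p ∈ D} → Fin n × Bool)
    (U : {p // p ∈ C \ D} → Bool) :
    CompatAlong (C := C) r b (glueTableau T U) ↔ CompatAlong r b T ∧
      ∀ p q : {p // p ∈ C \ D}, r p q → EntryCompat b (Fin.last n, U p) (Fin.last n, U q) := by
  constructor
  · intro h
    refine ⟨fun p q hpq => ?_, fun p q hpq => ?_⟩
    · have := h ⟨p, hDC p.2⟩ ⟨q, hDC q.2⟩ hpq
      rwa [glueTableau_of_mem T U p.2, glueTableau_of_mem T U q.2,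
        entryCompat_entryCastSucc] at this
    · obtain ⟨hpC, hpD⟩ := Finset.mem_sdiff.1 p.2
      obtain ⟨hqC, hqD⟩ := Finset.mem_sdiff.1 q.2
      have := h ⟨p, hpC⟩ ⟨q, hqC⟩ hpq
      rwa [glueTableau_of_notMem T U hpD, glueTableau_of_notMem T U hqD] at this
  · rintro ⟨hT, hU⟩ p q hpq
    by_cases hq : (q : ℕ × ℕ) ∈ D
    · have hp := hD p p.2 q hq hpq
      rw [glueTableau_of_mem T U hp, glueTableau_of_mem T U hq, entryCompat_entryCastSucc]
      exact hT _ _ hpq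
    rw [glueTableau_of_notMem T U hq]
    by_cases hp : (p : ℕ × ℕ) ∈ D
    · rw [glueTableau_of_mem T U hp]
      exact entryCompat_entryCastSucc_last _ _ _
    · rw [glueTableau_of_notMem T U hp]
      exact hU _ _ hpq

theorem isPrimedTableau_glueTableau {n : ℕ} {C D : Finset (ℕ × ℕ)} (hDC : D ⊆ C)
    (hD : IsLowerIn C D) (T : {p // p ∈ D} → Fin n × Bool) (U : {p // p ∈ C \ D} → Bool) :
    IsPrimedTableau (C := C) (glueTableau T U) ↔ IsPrimedTableau T ∧ IsStripFilling U := by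
  unfold IsPrimedTableau IsStripFilling
  rw [compatAlong_glueTableau hDC hD.1, compatAlong_glueTableau hDC hD.2, and_and_and_comm]
  simp only [entryCompat_true_last, entryCompat_false_last]

theorem glueTableau_inj {n : ℕ} {C D : Finset (ℕ × ℕ)} (hDC : D ⊆ C)
    {T T' : {p // p ∈ D} → Fin n × Bool} {U U' : {p // p ∈ C \ D} → Bool} :
    glueTableau (C := C) T U = glueTableau T' U' ↔ T = T' ∧ U = U' := by
  refine ⟨fun h => ⟨funext fun p => ?_, funext fun p => ?_⟩, fun h => h.1 ▸ h.2 ▸ rfl⟩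
  · have := congrFun h ⟨p, hDC p.2⟩
    rw [glueTableau_of_mem T U p.2, glueTableau_of_mem T' U' p.2] at this
    exact entryCastSucc_injective this
  · obtain ⟨hpC, hpD⟩ := Finset.mem_sdiff.1 p.2
    have := congrFun h ⟨p, hpC⟩
    rw [glueTableau_of_notMem T U hpD, glueTableau_of_notMem T' U' hpD] at this
    exact congrArg Prod.snd this

/-- The boxes whose entry is not the largest letter. -/
def lowerPart {n : ℕ} {C : Finset (ℕ × ℕ)} (T : {p // p ∈ C} → Fin (n + 1) × Bool) :
    Finset (ℕ × ℕ) :=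
  (Finset.univ.filter fun p => (T p).1 ≠ Fin.last n).map (Function.Embedding.subtype _)

theorem mem_lowerPart {n : ℕ} {C : Finset (ℕ × ℕ)} {T : {p // p ∈ C} → Fin (n + 1) × Bool}
    {p : {p // p ∈ C}} : (p : ℕ × ℕ) ∈ lowerPart T ↔ (T p).1 ≠ Fin.last n := by
  simp [lowerPart]

theorem lowerPart_subset {n : ℕ} {C : Finset (ℕ × ℕ)} (T : {p // p ∈ C} → Fin (n + 1) × Bool) :
    lowerPart T ⊆ C :=
  Finset.map_subtype_subset _

theorem exists_glueTableau {n : ℕ} {C : Finset (ℕ × ℕ)} (T : {p // p ∈ C} → Fin (n + 1) × Bool) :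
    ∃ (T₁ : {p // p ∈ lowerPart T} → Fin n × Bool) (U : {p // p ∈ C \ lowerPart T} → Bool),
      glueTableau T₁ U = T := by
  have hsub := lowerPart_subset T
  refine ⟨fun p => ((T ⟨p, hsub p.2⟩).1.castPred (mem_lowerPart.1 p.2), (T ⟨p, hsub p.2⟩).2),
    fun p => (T ⟨p, (Finset.mem_sdiff.1 p.2).1⟩).2, ?_⟩
  funext p
  by_cases h : (p : ℕ × ℕ) ∈ lowerPart T
  · rw [glueTableau_of_mem _ _ h]
    rfl
  · rw [glueTableau_of_notMem _ _ h, ← not_not.1 (mt mem_lowerPart.2 h)]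

theorem lowerPart_glueTableau {n : ℕ} {C D : Finset (ℕ × ℕ)} (hDC : D ⊆ C)
    (T : {p // p ∈ D} → Fin n × Bool) (U : {p // p ∈ C \ D} → Bool) :
    lowerPart (C := C) (glueTableau T U) = D := by
  have key (p : {p // p ∈ C}) : (glueTableau T U p).1 ≠ Fin.last n ↔ (p : ℕ × ℕ) ∈ D := by
    by_cases h : (p : ℕ × ℕ) ∈ D
    · simp [glueTableau_of_mem T U h, h, entryCastSucc, Fin.castSucc_ne_last]
    · simp [glueTableau_of_notMem T U h, h]
  ext p
  exact ⟨fun hp => (key ⟨p, lowerPart_subset _ hp⟩).1 (mem_lowerPart.1 hp),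
    fun hp => mem_lowerPart.2 ((key ⟨p, hDC hp⟩).2 hp)⟩

theorem CompatAlong.isLowerAlong_lowerPart {n : ℕ} {C : Finset (ℕ × ℕ)}
    {r : ℕ × ℕ → ℕ × ℕ → Prop} {b : Bool} {T : {p // p ∈ C} → Fin (n + 1) × Bool}
    (hT : CompatAlong r b T) : IsLowerAlong r C (lowerPart T) := by
  intro p hp q hq hpq
  have hqC := lowerPart_subset T hq
  have hlt : ((T ⟨q, hqC⟩).1 : ℕ) < n := Fin.val_lt_last (mem_lowerPart.1 hq)
  have hle : ordE (T ⟨p, hp⟩) ≤ ordE (T ⟨q, hqC⟩) := (hT ⟨p, hp⟩ ⟨q, hqC⟩ hpq).1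
  refine mem_lowerPart.2 fun hlast : (T ⟨p, hp⟩).1 = Fin.last n => ?_
  simp only [ordE, hlast, Fin.val_last] at hle
  split_ifs at hle <;> omega

theorem IsPrimedTableau.isLowerIn_lowerPart {n : ℕ} {C : Finset (ℕ × ℕ)}
    {T : {p // p ∈ C} → Fin (n + 1) × Bool} (hT : IsPrimedTableau T) :
    IsLowerIn C (lowerPart T) :=
  ⟨hT.1.isLowerAlong_lowerPart, hT.2.isLowerAlong_lowerPart⟩

variable {R : Type*} [CommRing R]

/-- The total weight of the entries available in the box `p` of a set `S` of boxes filled by one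
letter: unprimed unless there is a box of `S` below, primed unless there is one to the left. -/
noncomputable def stripWeight (S : Finset (ℕ × ℕ)) (x y : ℤ → R) (p : ℕ × ℕ) : R :=
  (if ∃ q ∈ S, Below p q then 0 else x (content p)) +
    (if ∃ q ∈ S, RightOf q p then 0 else y (content p))

theorem sum_isStripFilling (S : Finset (ℕ × ℕ)) (x y : ℤ → R) :
    ∑ U : {p // p ∈ S} → Bool with IsStripFilling U,
      ∏ p : {p // p ∈ S}, (if U p then y (content p) else x (content p)) =
    ∏ p ∈ S, stripWeight S x y p := by
  let allowed (p : {p // p ∈ S}) : Finset Bool := Finset.univ.filter fun b =>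
    ((∃ q ∈ S, RightOf q p) → b = false) ∧ ((∃ q ∈ S, Below p q) → b = true)
  have hweight (p : {p // p ∈ S}) : stripWeight S x y p =
      ∑ b ∈ allowed p, (if b then y (content p) else x (content p)) := by
    rw [Finset.sum_filter, Fintype.sum_bool, stripWeight]
    by_cases h1 : ∃ q ∈ S, RightOf q p <;> by_cases h2 : ∃ q ∈ S, Below p q <;>
      simp [h1, h2, add_comm]
  have hpi : (Finset.univ.filter fun U : {p // p ∈ S} → Bool => IsStripFilling U) =
      Fintype.piFinset allowed := by
    ext U
    simp only [allowed, Finset.mem_filter, Finset.mem_univ, true_and, Fintype.mem_piFinset]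
    exact ⟨fun h p => ⟨fun ⟨q, hq, hqp⟩ => h.1 ⟨q, hq⟩ p hqp,
        fun ⟨q, hq, hqp⟩ => h.2 p ⟨q, hq⟩ hqp⟩,
      fun h => ⟨fun p q hpq => (h q).1 ⟨p, p.2, hpq⟩, fun p q hpq => (h p).2 ⟨q, q.2, hpq⟩⟩⟩
  rw [hpi, ← Finset.prod_coe_sort S, Finset.prod_congr rfl fun p _ => hweight p,
    Finset.prod_univ_sum]

theorem prod_eq_prod_mul_prod_sdiff {α : Type*} [DecidableEq α] {C D : Finset α} (hDC : D ⊆ C)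
    (f : {p // p ∈ C} → R) : ∏ p, f p = (∏ p : {p // p ∈ D}, f ⟨p, hDC p.2⟩) *
      ∏ p : {p // p ∈ C \ D}, f ⟨p, (Finset.mem_sdiff.1 p.2).1⟩ := by
  obtain ⟨g, hg⟩ : ∃ g : α → R, ∀ p, f p = g p :=
    ⟨Function.extend Subtype.val f 1, fun p => (Subtype.val_injective.extend_apply f 1 p).symm⟩
  simp only [hg]
  rw [Finset.prod_coe_sort C g, Finset.prod_coe_sort D g, Finset.prod_coe_sort (C \ D) g, mul_comm,
    Finset.prod_sdiff hDC]

theorem prod_entryWeight_glueTableau {n : ℕ} {C D : Finset (ℕ × ℕ)} (hDC : D ⊆ C)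
    (X Y : Fin (n + 1) → ℤ → R) (T : {p // p ∈ D} → Fin n × Bool) (U : {p // p ∈ C \ D} → Bool) :
    ∏ p : {p // p ∈ C}, entryWeight X Y p (glueTableau (C := C) T U p) =
      (∏ p : {p // p ∈ D}, entryWeight (Fin.init X) (Fin.init Y) p (T p)) *
        ∏ p : {p // p ∈ C \ D},
          (if U p then Y (Fin.last n) (content p) else X (Fin.last n) (content p)) := by
  rw [prod_eq_prod_mul_prod_sdiff hDC]
  refine congrArg₂ (· * ·) (Fintype.prod_congr _ _ fun p => ?_) (Fintype.prod_congr _ _ fun p => ?_)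
  · rw [glueTableau_of_mem T U p.2]
    rfl
  · rw [glueTableau_of_notMem T U (Finset.mem_sdiff.1 p.2).2]
    rfl

theorem QGen_succ (n : ℕ) (C : Finset (ℕ × ℕ)) (X Y : Fin (n + 1) → ℤ → R) :
    QGen (n + 1) C X Y = ∑ D ∈ C.powerset with IsLowerIn C D,
      QGen n D (Fin.init X) (Fin.init Y) *
        ∏ p ∈ C \ D, stripWeight (C \ D) (X (Fin.last n)) (Y (Fin.last n)) p := by
  rw [QGen_eq_sum_isPrimedTableau, ← Finset.sum_fiberwise_of_maps_to
    (t := C.powerset.filter (IsLowerIn C)) (g := lowerPart) fun T hT => by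
      simp only [Finset.mem_filter, Finset.mem_univ, true_and, Finset.mem_powerset] at hT ⊢
      exact ⟨lowerPart_subset T, hT.isLowerIn_lowerPart⟩]
  refine Finset.sum_congr rfl fun D hD => ?_
  obtain ⟨hDC, hD⟩ : D ⊆ C ∧ IsLowerIn C D := by simpa using hD
  rw [QGen_eq_sum_isPrimedTableau, ← sum_isStripFilling, Finset.sum_mul_sum,
    ← Finset.sum_product']
  symm
  refine Finset.sum_bij (fun x _ => glueTableau x.1 x.2) ?_ ?_ ?_ ?_
  · rintro ⟨T, U⟩ h
    simp only [Finset.mem_product, Finset.mem_filter, Finset.mem_univ, true_and] at h ⊢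
    exact ⟨(isPrimedTableau_glueTableau hDC hD T U).2 h, lowerPart_glueTableau hDC T U⟩
  · rintro ⟨T, U⟩ _ ⟨T', U'⟩ _ h
    exact Prod.ext_iff.2 ((glueTableau_inj hDC).1 h)
  · intro T hTD
    obtain ⟨hT, rfl⟩ : IsPrimedTableau T ∧ lowerPart T = D := by simpa using hTD
    obtain ⟨T₁, U, h⟩ := exists_glueTableau T
    refine ⟨⟨T₁, U⟩, ?_, h⟩
    rw [← h, isPrimedTableau_glueTableau hDC hD] at hT
    simpa using hT
  · rintro ⟨T, U⟩ _
    exact (prod_entryWeight_glueTableau hDC X Y T U).symm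

theorem QGen_empty (n : ℕ) (X Y : Fin n → ℤ → R) : QGen n ∅ X Y = 1 := by
  have hfilter : (Finset.univ.filter fun T : {p : ℕ × ℕ // p ∈ (∅ : Finset (ℕ × ℕ))} →
      Fin n × Bool => IsPrimedTableau T) = Finset.univ :=
    Finset.filter_true_of_mem fun T _ => ⟨fun p => absurd p.2 (Finset.notMem_empty _),
      fun p => absurd p.2 (Finset.notMem_empty _)⟩
  rw [QGen_eq_sum_isPrimedTableau, hfilter]
  simp

theorem QGen_zero (C : Finset (ℕ × ℕ)) (X Y : Fin 0 → ℤ → R) :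
    QGen 0 C X Y = if C = ∅ then 1 else 0 := by
  split_ifs with h
  · rw [h, QGen_empty]
  · obtain ⟨p, hp⟩ := Finset.nonempty_iff_ne_empty.2 h
    rw [QGen_eq_sum_isPrimedTableau]
    exact Finset.sum_eq_zero fun T _ => (T ⟨p, hp⟩).1.elim0

theorem compatAlong_comp_equiv {n : ℕ} {C D : Finset (ℕ × ℕ)} (e : {p // p ∈ C} ≃ {p // p ∈ D})
    {r : ℕ × ℕ → ℕ × ℕ → Prop} (he : ∀ p q, r (e p) (e q) ↔ r p q) {b : Bool}
    (T : {p // p ∈ D} → Fin n × Bool) : CompatAlong r b (T ∘ e) ↔ CompatAlong r b T := by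
  simp only [CompatAlong, ← e.forall_congr_right (q := fun _ => _), he, Function.comp_apply]

theorem QGen_map_addRight (n : ℕ) (C : Finset (ℕ × ℕ)) (b : ℕ) (X Y : Fin n → ℤ → R) :
    QGen n (C.map (addRightEmbedding (0, b))) X Y =
      QGen n C (fun k c => X k (b + c)) (fun k c => Y k (b + c)) := by
  let f : ℕ × ℕ ↪ ℕ × ℕ := addRightEmbedding (0, b)
  let e : {p // p ∈ C} ≃ {p // p ∈ C.map f} :=
    Equiv.ofBijective (fun p => ⟨f p, Finset.mem_map_of_mem f p.2⟩)
      ⟨fun p q h => Subtype.ext (f.injective (congrArg Subtype.val h)), fun ⟨q, hq⟩ =>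
        let ⟨p, hp, hpq⟩ := Finset.mem_map.1 hq
        ⟨⟨p, hp⟩, Subtype.ext hpq⟩⟩
  have he (p : {p // p ∈ C}) : (e p : ℕ × ℕ) = (p : ℕ × ℕ) + (0, b) := rfl
  have hright (p q) : RightOf (e p) (e q) ↔ RightOf p q := by
    simp only [RightOf, he, Prod.fst_add, Prod.snd_add]
    omega
  have hbelow (p q) : Below (e p) (e q) ↔ Below p q := by
    simp only [Below, he, Prod.fst_add, Prod.snd_add]
    omega
  have hcontent (p) : content (e p) = b + content p := by
    simp only [content, he, Prod.fst_add, Prod.snd_add]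
    push_cast
    ring
  rw [QGen_eq_sum_isPrimedTableau, QGen_eq_sum_isPrimedTableau]
  refine Finset.sum_equiv (e.symm.arrowCongr (Equiv.refl _)) (fun T => ?_) fun T _ => ?_
  · rw [Finset.mem_filter_univ, Finset.mem_filter_univ]
    exact and_congr (compatAlong_comp_equiv e hright T).symm
      (compatAlong_comp_equiv e hbelow T).symm
  · refine (Fintype.prod_equiv e _ _ fun p => ?_).symm
    simp [entryWeight, hcontent]

end Tableaux

section Recursion

/-- `f` lists the parts of a strict partition of length `p`, followed by zeros. -/
structure IsStrictPartition (f : ℕ → ℕ) (p : ℕ) : Prop where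
  lt : ∀ i j, i < j → j < p → f j < f i
  pos : ∀ i, i < p → 0 < f i
  eq_zero : ∀ i, p ≤ i → f i = 0

theorem IsStrictPartition.succ_lt_or_eq_zero {f : ℕ → ℕ} {p : ℕ} (hf : IsStrictPartition f p)
    (i : ℕ) : f (i + 1) < f i ∨ f (i + 1) = 0 :=
  (lt_or_ge (i + 1) p).imp (hf.lt i (i + 1) i.lt_succ_self) (hf.eq_zero (i + 1))

theorem IsStrictPartition.antitone {f : ℕ → ℕ} {p : ℕ} (hf : IsStrictPartition f p) :
    Antitone f :=
  antitone_nat_of_succ_le fun i => by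
    have := hf.succ_lt_or_eq_zero i
    omega

/-- Extension of a finite sequence by zeros. -/
def zeroExtend {p : ℕ} (ν : Fin p → ℕ) (i : ℕ) : ℕ := if h : i < p then ν ⟨i, h⟩ else 0

theorem zeroExtend_of_lt {p : ℕ} (ν : Fin p → ℕ) (i : Fin p) : zeroExtend ν i = ν i :=
  dif_pos i.2

theorem zeroExtend_of_le {p : ℕ} (ν : Fin p → ℕ) {i : ℕ} (h : p ≤ i) : zeroExtend ν i = 0 :=
  dif_neg h.not_gt

theorem zeroExtend_eq_of_le {p : ℕ} {f : ℕ → ℕ} (hf : ∀ i, p ≤ i → f i = 0) :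
    zeroExtend (fun i : Fin p => f i) = f := by
  funext i
  rcases lt_or_ge i p with h | h
  · exact zeroExtend_of_lt _ ⟨i, h⟩
  · rw [zeroExtend_of_le _ h, hf i h]

theorem zeroExtend_le_iff {p : ℕ} {ν : Fin p → ℕ} {f : ℕ → ℕ} :
    zeroExtend ν ≤ f ↔ ∀ i : Fin p, ν i ≤ f i := by
  refine ⟨fun h i => zeroExtend_of_lt ν i ▸ h i, fun h i => ?_⟩
  rcases lt_or_ge i p with hi | hi
  · exact (zeroExtend_of_lt ν ⟨i, hi⟩).trans_le (h ⟨i, hi⟩)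
  · exact (zeroExtend_of_le ν hi).trans_le (Nat.zero_le _)

theorem strictAntiOn_zeroExtend_iff {p : ℕ} {ν : Fin p → ℕ} :
    StrictAntiOn (zeroExtend ν) (Set.Iio p) ↔ StrictAnti ν := by
  refine ⟨fun h _ _ hij => ?_, fun h i hi j hj hij => ?_⟩
  · simpa only [zeroExtend_of_lt] using h (Fin.is_lt _) (Fin.is_lt _) hij
  · simpa only [zeroExtend_of_lt] using
      (zeroExtend_of_lt ν ⟨j, hj⟩).trans_lt
        ((h (show (⟨i, hi⟩ : Fin p) < ⟨j, hj⟩ from hij)).trans_eq (zeroExtend_of_lt ν ⟨i, hi⟩).symm)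

theorem antitone_zeroExtend {p : ℕ} {ν : Fin p → ℕ} (hν : StrictAnti ν) :
    Antitone (zeroExtend ν) := fun _ j hij => by
  rcases lt_or_ge j p with h | h
  · exact (strictAntiOn_zeroExtend_iff.2 hν).antitoneOn (hij.trans_lt h) h hij
  · exact (zeroExtend_of_le ν h).trans_le (Nat.zero_le _)

theorem isStrictPartition_zeroExtend {p : ℕ} {ν : Fin p → ℕ} (hν : StrictAnti ν)
    (hpos : ∀ i, 0 < ν i) : IsStrictPartition (zeroExtend ν) p where
  lt _ _ hij hj := strictAntiOn_zeroExtend_iff.2 hν (hij.trans hj) hj hij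
  pos i hi := (zeroExtend_of_lt ν ⟨i, hi⟩).symm ▸ hpos ⟨i, hi⟩
  eq_zero _ hi := zeroExtend_of_le ν hi

theorem mem_shiftedCells {lam mu : ℕ → ℕ} {l : ℕ} (h : Antitone lam) {p : ℕ × ℕ} :
    p ∈ shiftedCells lam mu l ↔ p.1 < l ∧ p.1 + mu p.1 ≤ p.2 ∧ p.2 < p.1 + lam p.1 := by
  have := h (Nat.zero_le p.1)
  simp only [shiftedCells, Finset.mem_filter, Finset.mem_product, Finset.mem_range]
  omega

theorem add_mem_shiftedCells {lam mu : ℕ → ℕ} {l : ℕ} (h : Antitone lam) {i c : ℕ} :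
    (i, i + c) ∈ shiftedCells lam mu l ↔ i < l ∧ mu i ≤ c ∧ c < lam i := by
  simp only [mem_shiftedCells h, add_le_add_iff_left, add_lt_add_iff_left]

theorem shiftedCells_sdiff {lam nu mu : ℕ → ℕ} {l : ℕ} (hlam : Antitone lam) (hnu : Antitone nu)
    (hmu : mu ≤ nu) :
    shiftedCells lam mu l \ shiftedCells nu mu l = shiftedCells lam nu l := by
  ext p
  have : mu p.1 ≤ nu p.1 := hmu p.1
  rw [Finset.mem_sdiff, mem_shiftedCells hlam, mem_shiftedCells hlam, mem_shiftedCells hnu]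
  omega

theorem eq_on_of_shiftedCells_eq {lam lam' mu : ℕ → ℕ} {l : ℕ} (hlam : Antitone lam)
    (hlam' : Antitone lam') (hmu : mu ≤ lam) (hmu' : mu ≤ lam')
    (h : shiftedCells lam mu l = shiftedCells lam' mu l) {i : ℕ} (hi : i < l) :
    lam i = lam' i := by
  have key (c : ℕ) (hc : mu i ≤ c) : c < lam i ↔ c < lam' i := by
    have := Finset.ext_iff.1 h (i, i + c)
    rw [add_mem_shiftedCells hlam, add_mem_shiftedCells hlam'] at this
    simpa only [hi, hc, true_and] using this
  exact le_antisymm (not_lt.1 fun hlt => ((key _ (hmu' i)).1 hlt).false)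
    (not_lt.1 fun hlt => ((key _ (hmu i)).2 hlt).false)

theorem prod_shiftedCells {M : Type*} [CommMonoid M] {lam mu : ℕ → ℕ} {l : ℕ} (hlam : Antitone lam)
    (f : ℕ × ℕ → M) : ∏ p ∈ shiftedCells lam mu l, f p =
      ∏ i : Fin l, ∏ c ∈ Finset.Ico (mu i) (lam i), f (i, i + c) := by
  rw [Finset.prod_sigma']
  symm
  refine Finset.prod_bij (fun s _ => ((s.1 : ℕ), (s.1 : ℕ) + s.2)) ?_ ?_ ?_ fun _ _ => rfl
  · rintro ⟨i, c⟩ hc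
    simpa [add_mem_shiftedCells hlam] using hc
  · rintro ⟨i, c⟩ _ ⟨j, d⟩ _ h
    obtain ⟨h1, h2⟩ := Prod.mk.inj h
    obtain rfl := Fin.ext h1
    obtain rfl : c = d := Nat.add_left_cancel h2
    rfl
  · rintro ⟨i, j⟩ hp
    rw [mem_shiftedCells hlam] at hp
    refine ⟨⟨⟨i, hp.1⟩, j - i⟩, ?_, ?_⟩
    · simp only [Finset.mem_sigma, Finset.mem_univ, true_and, Finset.mem_Ico]
      dsimp only at hp
      omega
    · exact Prod.ext rfl (by dsimp only; omega)

theorem isLowerIn_shiftedCells {lam nu mu : ℕ → ℕ} {l : ℕ} (hlam : Antitone lam)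
    (hnu : Antitone nu) (hstrict : StrictAntiOn nu (Set.Iio l)) :
    IsLowerIn (shiftedCells lam mu l) (shiftedCells nu mu l) := by
  constructor <;> rintro p hp q hq ⟨h1, h2⟩ <;>
    rw [mem_shiftedCells hnu] at hq ⊢ <;> rw [mem_shiftedCells hlam] at hp <;>
    rw [h1, h2] at hq
  · omega
  · have := hstrict (Set.mem_Iio.2 hp.1) hq.1 p.1.lt_succ_self
    omega

variable {R : Type*} [CommRing R]

/-- The weight of the boxes of contents `c, …, a - 1` in a row of length `a` above a row of
length `b`, all filled with one letter.  The box of content `c` can carry both markings, unless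
`c = b` and the last box of the row below carries the same letter. -/
noncomputable def stepCoeff (x y : ℤ → R) (a b c : ℕ) : R :=
  if c = a then 1
  else (if c = b ∧ b ≠ 0 then y c else x c + y c) * ∏ d ∈ Finset.Ioo c a, x d

theorem stepCoeff_self (x y : ℤ → R) (a b : ℕ) : stepCoeff x y a b a = 1 := if_pos rfl

theorem exists_rightOf_iff {lam nu : ℕ → ℕ} {l i c : ℕ} (hlam : Antitone lam) (hi : i < l)
    (hc : c < lam i) : (∃ q ∈ shiftedCells lam nu l, RightOf q (i, i + c)) ↔ nu i < c := by
  constructor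
  · rintro ⟨⟨i', j⟩, hq, h1, h2⟩
    dsimp only at h1 h2
    subst h1
    rw [mem_shiftedCells hlam] at hq
    dsimp only at hq
    omega
  · intro h
    exact ⟨(i, i + (c - 1)), (add_mem_shiftedCells hlam).2 ⟨hi, by omega, by omega⟩, rfl,
      by dsimp only; omega⟩

theorem exists_below_iff {lam nu : ℕ → ℕ} {l i c : ℕ} (hlam : IsStrictPartition lam l)
    (hnu : StrictAntiOn nu (Set.Iio l)) (hinter : lam (i + 1) ≤ nu i) (hc : nu i ≤ c) :
    (∃ q ∈ shiftedCells lam nu l, Below (i, i + c) q) ↔ c = lam (i + 1) ∧ lam (i + 1) ≠ 0 := by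
  constructor
  · rintro ⟨⟨i', j⟩, hq, h1, h2⟩
    dsimp only at h1 h2
    subst h1
    rw [mem_shiftedCells hlam.antitone] at hq
    dsimp only at hq
    omega
  · rintro ⟨h, h0⟩
    have hil : i + 1 < l := not_le.1 fun hle => h0 (hlam.eq_zero _ hle)
    have hlt := hnu (Set.mem_Iio.2 (Nat.lt_of_succ_lt hil)) hil i.lt_succ_self
    refine ⟨(i + 1, i + c), (mem_shiftedCells hlam.antitone).2 ⟨hil, ?_, ?_⟩, rfl, rfl⟩ <;>
      dsimp only <;> omega

theorem prod_stripWeight_row {lam nu : ℕ → ℕ} {l i : ℕ} (hlam : IsStrictPartition lam l)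
    (hnu : StrictAntiOn nu (Set.Iio l)) (hi : i < l) (hlow : lam (i + 1) ≤ nu i)
    (hup : nu i ≤ lam i) (x y : ℤ → R) :
    ∏ c ∈ Finset.Ico (nu i) (lam i), stripWeight (shiftedCells lam nu l) x y (i, i + c) =
      stepCoeff x y (lam i) (lam (i + 1)) (nu i) := by
  have hweight (c : ℕ) (hc : nu i ≤ c) (hc' : c < lam i) :
      stripWeight (shiftedCells lam nu l) x y (i, i + c) =
        (if c = lam (i + 1) ∧ lam (i + 1) ≠ 0 then 0 else x c) + if nu i < c then 0 else y c := by
    have hcontent : content (i, i + c) = c := by simp [content]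
    simp only [stripWeight, exists_rightOf_iff hlam.antitone hi hc',
      exists_below_iff hlam hnu hlow hc, hcontent]
  rcases hup.eq_or_lt with heq | hlt
  · rw [heq, Finset.Ico_self, Finset.prod_empty, stepCoeff_self]
  · rw [← Finset.Ioo_insert_left hlt, Finset.prod_insert Finset.left_notMem_Ioo, stepCoeff,
      if_neg hlt.ne, hweight _ le_rfl hlt, if_neg (lt_irrefl _), ite_add, zero_add]
    congr 1
    refine Finset.prod_congr rfl fun c hc => ?_
    rw [Finset.mem_Ioo] at hc
    rw [hweight c hc.1.le hc.2, if_neg (by omega), if_pos hc.1, add_zero]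

/-- The sequences `ν` with `lam (i + 1) ≤ ν i ≤ lam i`. -/
def interlacing (p : ℕ) (lam : ℕ → ℕ) : Finset (Fin p → ℕ) :=
  Fintype.piFinset fun i : Fin p => Finset.Icc (lam (i + 1)) (lam i)

theorem mem_interlacing {p : ℕ} {lam : ℕ → ℕ} {ν : Fin p → ℕ} :
    ν ∈ interlacing p lam ↔ ∀ i : Fin p, lam (i + 1) ≤ ν i ∧ ν i ≤ lam i := by
  simp only [interlacing, Fintype.mem_piFinset, Finset.mem_Icc]

theorem prod_stripWeight_shiftedCells {lam : ℕ → ℕ} {l : ℕ} {ν : Fin l → ℕ}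
    (hlam : IsStrictPartition lam l) (hν : ν ∈ interlacing l lam) (hstrict : StrictAnti ν)
    (x y : ℤ → R) :
    ∏ p ∈ shiftedCells lam (zeroExtend ν) l,
        stripWeight (shiftedCells lam (zeroExtend ν) l) x y p =
      ∏ i : Fin l, stepCoeff x y (lam i) (lam (i + 1)) (ν i) := by
  rw [prod_shiftedCells hlam.antitone]
  refine Finset.prod_congr rfl fun i _ => ?_
  have hi := mem_interlacing.1 hν i
  have hext := zeroExtend_of_lt ν i
  rw [prod_stripWeight_row hlam (strictAntiOn_zeroExtend_iff.2 hstrict) i.2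
    (hi.1.trans_eq hext.symm) (hext.trans_le hi.2), hext]

theorem exists_forall_iff_lt_of_pred {a b : ℕ} (hab : a ≤ b) {P : ℕ → Prop}
    (hP : ∀ c, a ≤ c → c + 1 < b → P (c + 1) → P c) :
    ∃ e, a ≤ e ∧ e ≤ b ∧ ∀ c, a ≤ c → c < b → (P c ↔ c < e) := by
  have hex : ∃ e, a ≤ e ∧ (e < b → ¬P e) := ⟨b, hab, fun h => absurd h (lt_irrefl b)⟩
  refine ⟨Nat.find hex, (Nat.find_spec hex).1, Nat.find_min' hex ⟨hab, fun h => absurd h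
    (lt_irrefl b)⟩, fun c hac hcb => ⟨fun hc => not_le.1 fun hle => ?_, fun hlt => ?_⟩⟩
  · induction c, hle using Nat.le_induction with
    | base => exact (Nat.find_spec hex).2 hcb hc
    | succ c hle ih =>
      have hac' : a ≤ c := (Nat.find_spec hex).1.trans hle
      exact ih hac' (Nat.lt_of_succ_lt hcb) (hP c hac' hcb hc)
  · by_contra hc
    exact Nat.find_min hex hlt ⟨hac, fun _ => hc⟩

theorem exists_rows_of_isLowerAlong_rightOf {lam mu : ℕ → ℕ} {l : ℕ} (hlam : Antitone lam)
    (hsub : mu ≤ lam) {D : Finset (ℕ × ℕ)} (hD : D ⊆ shiftedCells lam mu l)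
    (hlow : IsLowerAlong RightOf (shiftedCells lam mu l) D) :
    ∃ nu : ℕ → ℕ, mu ≤ nu ∧ nu ≤ lam ∧
      ∀ i c, (i, i + c) ∈ D ↔ i < l ∧ mu i ≤ c ∧ c < nu i := by
  have hrow (i : ℕ) : ∃ e, mu i ≤ e ∧ e ≤ lam i ∧
      ∀ c, mu i ≤ c → c < lam i → ((i, i + c) ∈ D ↔ c < e) := by
    refine exists_forall_iff_lt_of_pred (hsub i) fun c hc _ hmem =>
      hlow _ ((add_mem_shiftedCells hlam).2 ⟨?_, hc, by omega⟩) _ hmem ⟨rfl, rfl⟩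
    exact ((add_mem_shiftedCells hlam).1 (hD hmem)).1
  choose nu hmu hle hmem using hrow
  refine ⟨nu, hmu, hle, fun i c => ⟨fun h => ?_, fun ⟨_, hc, hc'⟩ => ?_⟩⟩
  · have hC := (add_mem_shiftedCells hlam).1 (hD h)
    exact ⟨hC.1, hC.2.1, (hmem i c hC.2.1 hC.2.2).1 h⟩
  · exact (hmem i c hc (hc'.trans_le (hle i))).2 hc'

theorem le_of_forall_not_rightOf_and_below {lam mu nu : ℕ → ℕ} {l q : ℕ}
    (hlam : IsStrictPartition lam l) (hmu : IsStrictPartition mu q) (hmunu : mu ≤ nu)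
    {D : Finset (ℕ × ℕ)} (hlow : IsLowerAlong Below (shiftedCells lam mu l) D)
    (hrows : ∀ i c, (i, i + c) ∈ D ↔ i < l ∧ mu i ≤ c ∧ c < nu i)
    (hstrip : ∀ p ∈ shiftedCells lam mu l \ D,
      ¬((∃ q ∈ shiftedCells lam mu l \ D, RightOf q p) ∧
        ∃ q ∈ shiftedCells lam mu l \ D, Below p q)) {i : ℕ} (hi : i < l) :
    lam (i + 1) ≤ nu i := by
  have hS (i c : ℕ) :
      (i, i + c) ∈ shiftedCells lam mu l \ D ↔ i < l ∧ nu i ≤ c ∧ c < lam i := by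
    have : mu i ≤ nu i := hmunu i
    rw [Finset.mem_sdiff, add_mem_shiftedCells hlam.antitone, hrows]
    omega
  by_contra! hlt
  have hil : i + 1 < l := not_le.1 fun hle => by
    rw [hlam.eq_zero _ hle] at hlt
    exact hlt.not_ge (Nat.zero_le _)
  have hlam_lt := hlam.lt i (i + 1) i.lt_succ_self hil
  have hcorner : (i, i + lam (i + 1)) ∈ shiftedCells lam mu l \ D :=
    (hS _ _).2 ⟨hi, hlt.le, hlam_lt⟩
  have hleft : (i, i + (lam (i + 1) - 1)) ∈ shiftedCells lam mu l \ D :=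
    (hS _ _).2 ⟨hi, by omega, by omega⟩
  have hbelow : (i + 1, i + 1 + (lam (i + 1) - 1)) ∈ shiftedCells lam mu l \ D := by
    rw [Finset.mem_sdiff, add_mem_shiftedCells hlam.antitone]
    have := hmu.succ_lt_or_eq_zero i
    have : mu i ≤ nu i := hmunu i
    refine ⟨⟨hil, by omega, by omega⟩, fun hmem => ?_⟩
    exact (Finset.mem_sdiff.1 hcorner).2 (hlow _ (Finset.mem_sdiff.1 hcorner).1 _ hmem
      ⟨rfl, by dsimp only; omega⟩)
  exact hstrip _ hcorner ⟨⟨_, hleft, rfl, by dsimp only; omega⟩, _, hbelow, rfl,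
    by dsimp only; omega⟩

theorem strictAntiOn_of_isLowerAlong_below {lam mu nu : ℕ → ℕ} {l q : ℕ}
    (hlam : IsStrictPartition lam l) (hmu : IsStrictPartition mu q) (hmunu : mu ≤ nu)
    (hnulam : nu ≤ lam) (hinter : ∀ i < l, lam (i + 1) ≤ nu i) {D : Finset (ℕ × ℕ)}
    (hlow : IsLowerAlong Below (shiftedCells lam mu l) D)
    (hrows : ∀ i c, (i, i + c) ∈ D ↔ i < l ∧ mu i ≤ c ∧ c < nu i) :
    StrictAntiOn nu (Set.Iio l) := by
  refine strictAntiOn_of_succ_lt Set.ordConnected_Iio fun i _ hi (hil : i + 1 < l) => ?_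
  change nu (i + 1) < nu i
  by_contra! hle
  have hlow_i : lam (i + 1) ≤ nu i := hinter i hi
  have hup : nu (i + 1) ≤ lam (i + 1) := hnulam (i + 1)
  have hlam_lt := hlam.lt i (i + 1) i.lt_succ_self hil
  have hpos := hlam.pos (i + 1) hil
  have hmu_i : mu i ≤ nu i := hmunu i
  have hmu_lt : mu (i + 1) < nu (i + 1) := by
    have := hmu.succ_lt_or_eq_zero i
    omega
  have hlast : (i + 1, i + 1 + (nu (i + 1) - 1)) ∈ D :=
    (hrows _ _).2 ⟨hil, by omega, by omega⟩
  have habove : (i, i + nu (i + 1)) ∈ D :=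
    hlow _ ((add_mem_shiftedCells hlam.antitone).2 ⟨hi, by omega, by omega⟩) _ hlast
      ⟨rfl, by dsimp only; omega⟩
  exact hle.not_gt ((hrows _ _).1 habove).2.2

theorem exists_eq_shiftedCells {lam mu : ℕ → ℕ} {l q : ℕ} (hlam : IsStrictPartition lam l)
    (hmu : IsStrictPartition mu q) (hsub : mu ≤ lam) {D : Finset (ℕ × ℕ)}
    (hD : D ⊆ shiftedCells lam mu l) (hlow : IsLowerIn (shiftedCells lam mu l) D)
    (hstrip : ∀ p ∈ shiftedCells lam mu l \ D,
      ¬((∃ q ∈ shiftedCells lam mu l \ D, RightOf q p) ∧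
        ∃ q ∈ shiftedCells lam mu l \ D, Below p q)) :
    ∃ ν ∈ interlacing l lam, StrictAnti ν ∧ mu ≤ zeroExtend ν ∧
      D = shiftedCells (zeroExtend ν) mu l := by
  obtain ⟨nu, hmunu, hnulam, hrows⟩ :=
    exists_rows_of_isLowerAlong_rightOf hlam.antitone hsub hD hlow.1
  have hinter (i : ℕ) (hi : i < l) : lam (i + 1) ≤ nu i :=
    le_of_forall_not_rightOf_and_below hlam hmu hmunu hlow.2 hrows hstrip hi
  have hstrict := strictAntiOn_of_isLowerAlong_below hlam hmu hmunu hnulam hinter hlow.2 hrows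
  have hext : zeroExtend (fun i : Fin l => nu i) = nu :=
    zeroExtend_eq_of_le fun i hi => Nat.le_zero.1 ((hnulam i).trans_eq (hlam.eq_zero i hi))
  have hν : StrictAnti fun i : Fin l => nu i := fun i j hij => hstrict i.2 j.2 hij
  refine ⟨fun i => nu i, mem_interlacing.2 fun i => ⟨hinter i i.2, hnulam i⟩, hν,
    hext.symm ▸ hmunu, ?_⟩
  have hanti := antitone_zeroExtend hν
  rw [hext] at hanti ⊢
  ext ⟨i, j⟩
  rw [mem_shiftedCells hanti]
  rcases le_or_gt i j with hij | hij
  · obtain ⟨c, rfl⟩ := Nat.exists_eq_add_of_le hij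
    simp only [hrows, add_le_add_iff_left, add_lt_add_iff_left]
  · have hnot : (i, j) ∉ D := fun hmem => by
      have := (mem_shiftedCells hlam.antitone).1 (hD hmem)
      dsimp only at this
      omega
    simp only [hnot, false_iff]
    omega

theorem QGen_shiftedCells_succ {n l q : ℕ} {lam mu : ℕ → ℕ} (hlam : IsStrictPartition lam l)
    (hmu : IsStrictPartition mu q) (hsub : mu ≤ lam) (X Y : Fin (n + 1) → ℤ → R) :
    QGen (n + 1) (shiftedCells lam mu l) X Y =
      ∑ ν ∈ interlacing l lam with StrictAnti ν ∧ mu ≤ zeroExtend ν,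
        (∏ i : Fin l, stepCoeff (X (Fin.last n)) (Y (Fin.last n)) (lam i) (lam (i + 1)) (ν i)) *
          QGen n (shiftedCells (zeroExtend ν) mu l) (Fin.init X) (Fin.init Y) := by
  have hlam_anti := hlam.antitone
  rw [QGen_succ]
  symm
  refine Finset.sum_of_injOn (fun ν => shiftedCells (zeroExtend ν) mu l) ?_ ?_ ?_ ?_
  · intro ν hν ν' hν' h
    rw [Finset.mem_coe, Finset.mem_filter] at hν hν'
    funext i
    have := eq_on_of_shiftedCells_eq (antitone_zeroExtend hν.2.1) (antitone_zeroExtend hν'.2.1)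
      hν.2.2 hν'.2.2 h i.2
    rwa [zeroExtend_of_lt, zeroExtend_of_lt] at this
  · intro ν hν
    rw [Finset.mem_coe, Finset.mem_filter, mem_interlacing] at hν
    rw [Finset.mem_coe, Finset.mem_filter, Finset.mem_powerset]
    have hanti := antitone_zeroExtend hν.2.1
    refine ⟨fun p hp => ?_, isLowerIn_shiftedCells hlam_anti hanti
      (strictAntiOn_zeroExtend_iff.2 hν.2.1)⟩
    have hle : zeroExtend ν p.1 ≤ lam p.1 := zeroExtend_le_iff.2 (fun i => (hν.1 i).2) p.1
    rw [mem_shiftedCells hanti] at hp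
    rw [mem_shiftedCells hlam_anti]
    omega
  · intro D hD hDim
    rw [Finset.mem_filter, Finset.mem_powerset] at hD
    by_contra hne
    obtain ⟨ν, hinter, hν, hmuν, rfl⟩ := exists_eq_shiftedCells hlam hmu hsub hD.1 hD.2 (by
      rintro p hp ⟨hright, hbelow⟩
      refine hne (mul_eq_zero_of_right _ (Finset.prod_eq_zero hp ?_))
      rw [stripWeight, if_pos hright, if_pos hbelow, add_zero])
    exact hDim ⟨ν, Finset.mem_coe.2 (Finset.mem_filter.2 ⟨hinter, hν, hmuν⟩), rfl⟩
  · intro ν hν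
    rw [Finset.mem_filter] at hν
    rw [shiftedCells_sdiff hlam_anti (antitone_zeroExtend hν.2.1) hν.2.2,
      prod_stripWeight_shiftedCells hlam hν.1 hν.2.1, mul_comm]

/-- The generalized skew Q-function `Q_{lam/mu}`, with value `0` unless `mu ⊆ lam`. -/
noncomputable def skewQ (n : ℕ) (lam mu : ℕ → ℕ) (l : ℕ) (X Y : Fin n → ℤ → R) : R :=
  if mu ≤ lam then QGen n (shiftedCells lam mu l) X Y else 0

theorem skewQ_succ {n l q : ℕ} {lam mu : ℕ → ℕ} (hlam : IsStrictPartition lam l)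
    (hmu : IsStrictPartition mu q) (X Y : Fin (n + 1) → ℤ → R) :
    skewQ (n + 1) lam mu l X Y = ∑ ν ∈ interlacing l lam with StrictAnti ν,
      (∏ i : Fin l, stepCoeff (X (Fin.last n)) (Y (Fin.last n)) (lam i) (lam (i + 1)) (ν i)) *
        skewQ n (zeroExtend ν) mu l (Fin.init X) (Fin.init Y) := by
  simp only [skewQ, mul_ite, mul_zero, ← Finset.sum_filter, Finset.filter_filter]
  split_ifs with hsub
  · exact QGen_shiftedCells_succ hlam hmu hsub X Y
  · rw [Finset.filter_false_of_mem, Finset.sum_empty]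
    rintro ν hν ⟨-, hmuν⟩
    exact hsub (hmuν.trans (zeroExtend_le_iff.2 fun i => (mem_interlacing.1 hν i).2))

end Recursion

section Entries

variable {R : Type*} [CommRing R]

theorem isStrictPartition_zero : IsStrictPartition 0 0 where
  lt _ _ _ h := absurd h (Nat.not_lt_zero _)
  pos _ h := absurd h (Nat.not_lt_zero _)
  eq_zero _ _ := rfl

theorem shiftedCells_eq_empty_iff {lam mu : ℕ → ℕ} {l : ℕ} (hlam : Antitone lam) :
    shiftedCells lam mu l = ∅ ↔ ∀ i < l, lam i ≤ mu i := by
  rw [Finset.eq_empty_iff_forall_notMem]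
  refine ⟨fun h i hi => not_lt.1 fun hlt => h (i, i + mu i)
    ((add_mem_shiftedCells hlam).2 ⟨hi, le_rfl, hlt⟩), fun h p hp => ?_⟩
  rw [mem_shiftedCells hlam] at hp
  have := h p.1 hp.1
  omega

theorem skewQ_zero {lam mu : ℕ → ℕ} {l : ℕ} (hlam : Antitone lam) (hl : ∀ i, l ≤ i → lam i = 0)
    (X Y : Fin 0 → ℤ → R) : skewQ 0 lam mu l X Y = if lam = mu then 1 else 0 := by
  simp only [skewQ, QGen_zero, shiftedCells_eq_empty_iff hlam, ← ite_and]
  refine if_congr ⟨fun ⟨hsub, h⟩ => funext fun i => ?_, ?_⟩ rfl rfl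
  · exact le_antisymm ((lt_or_ge i l).elim (h i) fun hi => hl i hi ▸ Nat.zero_le _) (hsub i)
  · rintro rfl
    exact ⟨le_rfl, fun _ _ => le_rfl⟩

theorem skewQ_self (n : ℕ) {lam : ℕ → ℕ} (hlam : Antitone lam) (l : ℕ) (X Y : Fin n → ℤ → R) :
    skewQ n lam lam l X Y = 1 := by
  rw [skewQ, if_pos le_rfl, (shiftedCells_eq_empty_iff hlam).2 fun _ _ => le_rfl, QGen_empty]

theorem shiftedCells_succ_of_eq_zero {lam mu : ℕ → ℕ} {l : ℕ} (hlam : Antitone lam)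
    (h : lam l = 0) : shiftedCells lam mu (l + 1) = shiftedCells lam mu l := by
  ext p
  have hl : p.1 = l → lam p.1 = 0 := fun hp => hp ▸ h
  rw [mem_shiftedCells hlam, mem_shiftedCells hlam]
  omega

theorem skewQ_succ_of_eq_zero {n l : ℕ} {lam mu : ℕ → ℕ} (hlam : Antitone lam)
    (h : lam l = 0) (X Y : Fin n → ℤ → R) :
    skewQ n lam mu (l + 1) X Y = skewQ n lam mu l X Y := by
  rw [skewQ, skewQ, shiftedCells_succ_of_eq_zero hlam h]

theorem zeroExtend_succ_of_last_eq_zero {p : ℕ} {ν : Fin (p + 1) → ℕ} (h : ν (Fin.last p) = 0) :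
    zeroExtend ν = zeroExtend (Fin.init ν) := by
  funext i
  rcases lt_trichotomy i p with hi | rfl | hi
  · exact (zeroExtend_of_lt ν (Fin.castSucc ⟨i, hi⟩)).trans
      (zeroExtend_of_lt (Fin.init ν) ⟨i, hi⟩).symm
  · rw [zeroExtend_of_le _ le_rfl, ← h]
    exact zeroExtend_of_lt ν (Fin.last i)
  · rw [zeroExtend_of_le _ hi.le, zeroExtend_of_le _ hi]

theorem antitone_zeroExtend_singleton (a : ℕ) : Antitone (zeroExtend ![a]) :=
  antitone_zeroExtend (Subsingleton.strictAnti _)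

theorem exists_isStrictPartition_zeroExtend_singleton (b : ℕ) :
    ∃ q, IsStrictPartition (zeroExtend ![b]) q := by
  rcases b.eq_zero_or_pos with rfl | hb
  · refine ⟨0, ?_⟩
    convert isStrictPartition_zero
    rw [zeroExtend_succ_of_last_eq_zero rfl]
    exact funext fun i => zeroExtend_of_le _ i.zero_le
  · exact ⟨1, isStrictPartition_zeroExtend (Subsingleton.strictAnti _) fun i => by
      rwa [Subsingleton.elim i 0]⟩

theorem qTwoRow_eq_skewQ (n a b : ℕ) (X Y : Fin n → ℤ → R) :
    qTwoRow n a b X Y = skewQ n (zeroExtend ![a, b]) 0 2 X Y := by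
  have hrows : (fun i => if i = 0 then a else if i = 1 then b else 0) = zeroExtend ![a, b] := by
    funext i
    rcases i with _ | _ | i <;> rfl
  rw [qTwoRow, skewQ, if_pos (show 0 ≤ zeroExtend ![a, b] from fun _ => Nat.zero_le _), hrows]
  rfl

theorem qRowShift_eq_skewQ (n a b : ℕ) (X Y : Fin n → ℤ → R) :
    qRowShift n ((a : ℤ) - b) b X Y = skewQ n (zeroExtend ![a]) (zeroExtend ![b]) 1 X Y := by
  have hle : zeroExtend ![b] ≤ zeroExtend ![a] ↔ b ≤ a := by
    rw [zeroExtend_le_iff, Fin.forall_fin_one]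
    rfl
  rw [qRowShift, skewQ]
  rcases le_or_gt b a with h | h
  · have hcells : (rowCells (a - b)).map (addRightEmbedding (0, b)) =
        shiftedCells (zeroExtend ![a]) (zeroExtend ![b]) 1 := by
      ext ⟨i, j⟩
      rw [mem_shiftedCells (antitone_zeroExtend_singleton a)]
      simp only [rowCells, Finset.mem_map, Finset.mem_image, Finset.mem_range]
      constructor
      · rintro ⟨_, ⟨c, hc, rfl⟩, h⟩
        obtain ⟨rfl, rfl⟩ := Prod.mk.inj h
        change 0 < 1 ∧ 0 + b ≤ c + b ∧ c + b < 0 + a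
        omega
      · rintro ⟨hi, hb, ha⟩
        obtain rfl : i = 0 := by simpa using hi
        change 0 + b ≤ j at hb
        change j < 0 + a at ha
        exact ⟨(0, j - b), ⟨j - b, by omega, rfl⟩, Prod.ext rfl (by simp; omega)⟩
    rw [if_neg (by omega), if_pos (hle.2 h), ← hcells, QGen_map_addRight]
    congr 2
    omega
  · rw [if_pos (by omega), if_neg (hle.not.2 h.not_ge)]

theorem qTwoRow_zero_right (n a : ℕ) (X Y : Fin n → ℤ → R) :
    qTwoRow n a 0 X Y = qRowShift n ((a : ℤ) - (0 : ℕ)) (0 : ℕ) X Y := by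
  have hinit : zeroExtend ![a, 0] = zeroExtend ![a] := by
    rw [zeroExtend_succ_of_last_eq_zero rfl]
    exact congrArg zeroExtend (funext fun i => by rw [Subsingleton.elim i 0]; rfl)
  have hzero : zeroExtend ![0] = 0 := by
    funext i
    rcases i with _ | i <;> rfl
  rw [qTwoRow_eq_skewQ, qRowShift_eq_skewQ, hinit, hzero,
    skewQ_succ_of_eq_zero (antitone_zeroExtend_singleton a) rfl]

theorem qRowShift_self (n b : ℕ) (X Y : Fin n → ℤ → R) :
    qRowShift n ((b : ℤ) - b) b X Y = 1 := by
  rw [qRowShift_eq_skewQ, skewQ_self n (antitone_zeroExtend_singleton b)]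

theorem qRowShift_of_lt {a b : ℕ} (h : a < b) (n : ℕ) (X Y : Fin n → ℤ → R) :
    qRowShift n ((a : ℤ) - b) b X Y = 0 := if_pos (by omega)

theorem qRowShift_zero_letters (a b : ℕ) (X Y : Fin 0 → ℤ → R) :
    qRowShift 0 ((a : ℤ) - b) b X Y = if a = b then 1 else 0 := by
  rw [qRowShift_eq_skewQ, skewQ_zero (antitone_zeroExtend_singleton a)
    fun _ h => zeroExtend_of_le _ h]
  exact if_congr ⟨fun h => congrFun h 0, fun h => h ▸ rfl⟩ rfl rfl

theorem strictAnti_pair {a b : ℕ} : StrictAnti ![a, b] ↔ b < a := by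
  rw [Fin.strictAnti_iff_succ_lt, Fin.forall_fin_one]
  rfl

theorem qTwoRow_zero_letters {a b : ℕ} (hab : b < a) (X Y : Fin 0 → ℤ → R) :
    qTwoRow 0 a b X Y = 0 := by
  rw [qTwoRow_eq_skewQ, skewQ_zero (antitone_zeroExtend (strictAnti_pair.2 hab))
    fun _ h => zeroExtend_of_le _ h]
  exact if_neg fun h => (Nat.zero_le b).not_gt (hab.trans_eq (congrFun h 0))

theorem qRowShift_succ (n a b : ℕ) (X Y : Fin (n + 1) → ℤ → R) :
    qRowShift (n + 1) ((a : ℤ) - b) b X Y =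
      ∑ c ∈ Finset.Icc 0 a, stepCoeff (X (Fin.last n)) (Y (Fin.last n)) a 0 c *
        qRowShift n ((c : ℤ) - b) b (Fin.init X) (Fin.init Y) := by
  rcases a.eq_zero_or_pos with rfl | ha
  · rw [Finset.Icc_self, Finset.sum_singleton, stepCoeff_self, one_mul]
    rcases b.eq_zero_or_pos with rfl | hb
    · rw [qRowShift_self, qRowShift_self]
    · rw [qRowShift_of_lt hb, qRowShift_of_lt hb]
  obtain ⟨q, hmu⟩ := exists_isStrictPartition_zeroExtend_singleton b
  have hlam : IsStrictPartition (zeroExtend ![a]) 1 :=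
    isStrictPartition_zeroExtend (Subsingleton.strictAnti _) fun i => by
      rwa [Subsingleton.elim i 0]
  simp only [qRowShift_eq_skewQ, skewQ_succ hlam hmu]
  rw [Finset.filter_true_of_mem fun ν _ => Subsingleton.strictAnti ν]
  refine Finset.sum_nbij' (fun ν => ν 0) (fun c => ![c]) ?_ ?_ ?_ ?_ ?_
  · exact fun ν hν => Finset.mem_Icc.2 (mem_interlacing.1 hν 0)
  · exact fun c hc => mem_interlacing.2 (Fin.forall_fin_one.2 (Finset.mem_Icc.1 hc))
  · exact fun ν _ => (FinVec.etaExpand_eq ν)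
  · exact fun _ _ => rfl
  · intro ν _
    rw [Fin.prod_univ_one, show ![ν 0] = ν from FinVec.etaExpand_eq ν]
    rfl

theorem qTwoRow_succ {n a b : ℕ} (hb : 0 < b) (hab : b < a) (X Y : Fin (n + 1) → ℤ → R) :
    qTwoRow (n + 1) a b X Y =
      ∑ c ∈ Finset.Icc b a, ∑ d ∈ Finset.Icc 0 b with d < c,
        stepCoeff (X (Fin.last n)) (Y (Fin.last n)) a b c *
          stepCoeff (X (Fin.last n)) (Y (Fin.last n)) b 0 d *
          qTwoRow n c d (Fin.init X) (Fin.init Y) := by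
  have hlam : IsStrictPartition (zeroExtend ![a, b]) 2 :=
    isStrictPartition_zeroExtend (strictAnti_pair.2 hab) (Fin.forall_fin_two.2 ⟨hb.trans hab, hb⟩)
  simp only [qTwoRow_eq_skewQ, skewQ_succ hlam isStrictPartition_zero]
  simp only [Finset.sum_filter]
  rw [← Finset.sum_product']
  refine Finset.sum_nbij' (fun ν => (ν 0, ν 1)) (fun c => ![c.1, c.2]) ?_ ?_ ?_ ?_ ?_
  · exact fun ν hν => Finset.mem_product.2
      ⟨Finset.mem_Icc.2 (mem_interlacing.1 hν 0), Finset.mem_Icc.2 (mem_interlacing.1 hν 1)⟩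
  · exact fun c hc => mem_interlacing.2 (Fin.forall_fin_two.2
      ⟨Finset.mem_Icc.1 (Finset.mem_product.1 hc).1, Finset.mem_Icc.1 (Finset.mem_product.1 hc).2⟩)
  · exact fun ν _ => FinVec.etaExpand_eq ν
  · exact fun _ _ => rfl
  · intro ν _
    have hν : ![ν 0, ν 1] = ν := FinVec.etaExpand_eq ν
    have hanti : StrictAnti ν ↔ ν 1 < ν 0 := by rw [← strictAnti_pair, hν]
    rw [Fin.prod_univ_two, hν]
    exact if_congr hanti rfl rfl

end Entries

section Form

variable {R : Type*} [CommRing R]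

/-- The bilinear form on a free module with prescribed values on pairs of basis vectors. -/
noncomputable def formOfEntries {I : Type*} (a : I → I → R) : LinearMap.BilinForm R (I →₀ R) :=
  Finsupp.linearCombination R fun i => Finsupp.linearCombination R (a i)

theorem formOfEntries_single {I : Type*} (a : I → I → R) (i j : I) :
    formOfEntries a (Finsupp.single i 1) (Finsupp.single j 1) = a i j := by
  simp [formOfEntries]

theorem formOfEntries_antisymm {I : Type*} {a : I → I → R} (h : ∀ i j, a i j = -a j i)
    (v w : I →₀ R) : formOfEntries a v w = -formOfEntries a w v := by
  have : formOfEntries a = -(formOfEntries a).flip := by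
    ext i j
    simpa [formOfEntries] using h i j
  exact congrArg (fun f : LinearMap.BilinForm R (I →₀ R) => f v w) this

theorem isAlt_formOfEntries {I : Type*} {a : I → I → R} (h : ∀ i j, a i j = -a j i)
    (h0 : ∀ i, a i i = 0) : (formOfEntries a).IsAlt := fun v => by
  induction v using Finsupp.induction_linear with
  | zero => simp
  | add v w hv hw =>
    simp only [map_add, LinearMap.add_apply, hv, hw, formOfEntries_antisymm h v w]
    ring
  | single i r => simp [formOfEntries, h0]

/-- Labels of the rows of a Józefiak–Pragacz–Nimmo matrix: `row a` for a part `a` of the outer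
partition and `col b` for a part `b` of the inner one.  A padding part `0`, when one is needed, is
put into the inner partition as `col 0`: it has the entries of `row 0` against all other labels,
but `row 0` may also arise from a part of the outer partition by removing boxes, and
`Q_{(0, 0)} = 1` is not antisymmetric. -/
inductive JPNLabel
  | row (a : ℕ)
  | col (b : ℕ)

open JPNLabel

/-- The entries of the Józefiak–Pragacz–Nimmo matrix. -/
noncomputable def jpnEntry (n : ℕ) (X Y : Fin n → ℤ → R) : JPNLabel → JPNLabel → R
  | row a, row b =>
    if b < a then qTwoRow n a b X Y else if a < b then -qTwoRow n b a X Y else 0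
  | row a, col b => qRowShift n ((a : ℤ) - b) b X Y
  | col b, row a => -qRowShift n ((a : ℤ) - b) b X Y
  | col _, col _ => 0

theorem jpnEntry_antisymm (n : ℕ) (X Y : Fin n → ℤ → R) (i j : JPNLabel) :
    jpnEntry n X Y i j = -jpnEntry n X Y j i := by
  cases i <;> cases j <;> simp only [jpnEntry, neg_neg, neg_zero]
  split_ifs <;> first | omega | simp

theorem jpnEntry_self (n : ℕ) (X Y : Fin n → ℤ → R) (i : JPNLabel) :
    jpnEntry n X Y i i = 0 := by
  cases i <;> simp [jpnEntry]

/-- The bilinear form with matrix `jpnEntry`. -/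
noncomputable def jpnForm (n : ℕ) (X Y : Fin n → ℤ → R) : LinearMap.BilinForm R (JPNLabel →₀ R) :=
  formOfEntries (jpnEntry n X Y)

theorem isAlt_jpnForm (n : ℕ) (X Y : Fin n → ℤ → R) : (jpnForm n X Y).IsAlt :=
  isAlt_formOfEntries (jpnEntry_antisymm n X Y) (jpnEntry_self n X Y)

/-- The basis vector with a given label. -/
noncomputable def labelVec (R : Type*) [CommRing R] (i : JPNLabel) : JPNLabel →₀ R :=
  Finsupp.single i 1

theorem jpnForm_labelVec (n : ℕ) (X Y : Fin n → ℤ → R) (i j : JPNLabel) :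
    jpnForm n X Y (labelVec R i) (labelVec R j) = jpnEntry n X Y i j :=
  formOfEntries_single _ i j

theorem stepCoeff_zero_of_lt (x y : ℤ → R) {a b c : ℕ} (hc : c < b) (hab : b < a) :
    stepCoeff x y a 0 c = (∏ d ∈ Finset.Ico b a, x d) * stepCoeff x y b 0 c := by
  have hprod : ∏ d ∈ Finset.Ioo c a, x d =
      (∏ d ∈ Finset.Ioo c b, x d) * ∏ d ∈ Finset.Ico b a, x d := by
    simp only [← Finset.Ico_succ_left_eq_Ioo]
    exact (Finset.prod_Ico_consecutive (fun d => x d) hc hab.le).symm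
  simp only [stepCoeff, (hc.trans hab).ne, hc.ne, ne_eq, not_true, and_false, if_false, hprod]
  ring

theorem stepCoeff_zero_self (x y : ℤ → R) {a b : ℕ} (hb : 0 < b) (hab : b < a) :
    stepCoeff x y a 0 b = stepCoeff x y a b b + ∏ d ∈ Finset.Ico b a, x d := by
  rw [← Finset.mul_prod_Ioo_eq_prod_Ico hab]
  simp only [stepCoeff, hab.ne, hb.ne', ne_eq, not_true, not_false_eq_true, and_self,
    if_false, if_true]
  ring

theorem stepCoeff_zero_of_gt (x y : ℤ → R) {a b c : ℕ} (hc : b < c) :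
    stepCoeff x y a 0 c = stepCoeff x y a b c := by
  simp only [stepCoeff, hc.ne', false_and, if_false, ne_eq, not_true, and_false]

/-- The generating vector of the ways to remove boxes filled with one letter from the end of a row
of length `a`, leaving at least `b` boxes, when the row below has length `b`. -/
noncomputable def stepRow (x y : ℤ → R) (a b : ℕ) : JPNLabel →₀ R :=
  ∑ c ∈ Finset.Icc b a, stepCoeff x y a b c • labelVec R (row c)

theorem stepRow_zero (x y : ℤ → R) {a b : ℕ} (hb : 0 < b) (hab : b < a) :
    stepRow x y a 0 = stepRow x y a b + (∏ d ∈ Finset.Ico b a, x d) • stepRow x y b 0 := by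
  have hsplit : stepRow x y a 0 =
      ∑ c ∈ Finset.Ico 0 b, stepCoeff x y a 0 c • labelVec R (row c) +
        (stepCoeff x y a 0 b • labelVec R (row b) +
          ∑ c ∈ Finset.Ioc b a, stepCoeff x y a 0 c • labelVec R (row c)) := by
    rw [Finset.add_sum_Ioc_eq_sum_Icc (f := fun c => stepCoeff x y a 0 c • labelVec R (row c))
      hab.le]
    exact (Finset.sum_Ico_consecutive (fun c => stepCoeff x y a 0 c • labelVec R (row c))
      b.zero_le (hab.le.trans a.le_succ)).symm
  have hbelow : ∑ c ∈ Finset.Ico 0 b, stepCoeff x y a 0 c • labelVec R (row c) =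
      (∏ d ∈ Finset.Ico b a, x d) •
        ∑ c ∈ Finset.Ico 0 b, stepCoeff x y b 0 c • labelVec R (row c) := by
    rw [Finset.smul_sum]
    exact Finset.sum_congr rfl fun c hc => by
      rw [stepCoeff_zero_of_lt x y (Finset.mem_Ico.1 hc).2 hab, mul_smul]
  have habove : ∑ c ∈ Finset.Ioc b a, stepCoeff x y a 0 c • labelVec R (row c) =
      ∑ c ∈ Finset.Ioc b a, stepCoeff x y a b c • labelVec R (row c) :=
    Finset.sum_congr rfl fun c hc => by rw [stepCoeff_zero_of_gt x y (Finset.mem_Ioc.1 hc).1]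
  rw [hsplit, hbelow, habove, stepCoeff_zero_self x y hb hab, stepRow, stepRow,
    ← Finset.add_sum_Ioc_eq_sum_Icc hab.le, ← Finset.sum_Ico_add_eq_sum_Icc b.zero_le,
    stepCoeff_self]
  module

/-- The image of a basis vector when the boxes of the largest letter are removed: the form for
`n + 1` letters is the pullback under `stepVec` of the form for `n` letters. -/
noncomputable def stepVec (x y : ℤ → R) : JPNLabel → JPNLabel →₀ R
  | row a => stepRow x y a 0
  | col b => labelVec R (col b)

theorem jpnForm_stepRow_col {n : ℕ} (X Y : Fin (n + 1) → ℤ → R) (a b : ℕ) :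
    jpnForm n (Fin.init X) (Fin.init Y) (stepRow (X (Fin.last n)) (Y (Fin.last n)) a 0)
      (labelVec R (col b)) = jpnEntry (n + 1) X Y (row a) (col b) := by
  simp only [stepRow, map_sum, LinearMap.sum_apply, map_smul, LinearMap.smul_apply,
    jpnForm_labelVec, smul_eq_mul, jpnEntry]
  exact (qRowShift_succ n a b X Y).symm

theorem jpnForm_stepRow_stepRow {n : ℕ} (X Y : Fin (n + 1) → ℤ → R) {a b : ℕ} (hb : 0 < b)
    (hab : b < a) :
    jpnForm n (Fin.init X) (Fin.init Y) (stepRow (X (Fin.last n)) (Y (Fin.last n)) a 0)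
      (stepRow (X (Fin.last n)) (Y (Fin.last n)) b 0) =
        jpnEntry (n + 1) X Y (row a) (row b) := by
  have hentry (c d : ℕ) (hd : d ≤ c) :
      jpnEntry n (Fin.init X) (Fin.init Y) (row c) (row d) =
        if d < c then qTwoRow n c d (Fin.init X) (Fin.init Y) else 0 := by
    rw [jpnEntry, if_neg hd.not_gt]
  rw [stepRow_zero _ _ hb hab, map_add, LinearMap.add_apply, map_smul, LinearMap.smul_apply,
    isAlt_jpnForm, smul_zero, add_zero, jpnEntry, if_pos hab, qTwoRow_succ hb hab]
  simp only [stepRow, map_sum, LinearMap.sum_apply, map_smul, LinearMap.smul_apply,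
    jpnForm_labelVec, smul_eq_mul, Finset.mul_sum]
  rw [Finset.sum_comm]
  refine Finset.sum_congr rfl fun c hc => ?_
  rw [Finset.sum_filter]
  refine Finset.sum_congr rfl fun d hd => ?_
  rw [hentry c d ((Finset.mem_Icc.1 hd).2.trans (Finset.mem_Icc.1 hc).1)]
  split_ifs <;> ring

end Form

section Labels

variable {R : Type*} [CommRing R]

open JPNLabel

/-- The labels of the rows of a Józefiak–Pragacz–Nimmo matrix, in order: the parts of the inner
partition occur in reverse. -/
def jpnLabels (l s : List ℕ) : List JPNLabel := l.map row ++ (s.map col).reverse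

/-- The Pfaffian of the Józefiak–Pragacz–Nimmo matrix whose outer and inner partition have the given
lists of parts. -/
noncomputable def jpnPfaffian (n : ℕ) (X Y : Fin n → ℤ → R) (l s : List ℕ) : R :=
  pfFunctional (isAlt_jpnForm n X Y) (extProd ((jpnLabels l s).map (labelVec R)))

theorem jpnEntry_row_zero_letters (X Y : Fin 0 → ℤ → R) {a : ℕ} {j : JPNLabel} (h : j ≠ col a) :
    jpnEntry 0 X Y (row a) j = 0 := by
  cases j with
  | row b =>
    rw [jpnEntry]
    split_ifs with hba hab
    · exact qTwoRow_zero_letters hba X Y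
    · rw [qTwoRow_zero_letters hab, neg_zero]
    · rfl
  | col b =>
    rw [jpnEntry, qRowShift_zero_letters, if_neg]
    rintro rfl
    exact h rfl

theorem jpnEntry_col_zero_letters (X Y : Fin 0 → ℤ → R) {b : ℕ} {j : JPNLabel} (h : j ≠ row b) :
    jpnEntry 0 X Y (col b) j = 0 := by
  cases j with
  | row a =>
    rw [jpnEntry_antisymm, jpnEntry_row_zero_letters, neg_zero]
    rintro ⟨⟩
    exact h rfl
  | col c => rfl

theorem mem_jpnLabels {l s : List ℕ} {j : JPNLabel} :
    j ∈ jpnLabels l s ↔ (∃ a ∈ l, row a = j) ∨ ∃ b ∈ s, col b = j := by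
  simp [jpnLabels]

theorem jpnPfaffian_zero_letters_cons_left (X Y : Fin 0 → ℤ → R) {a : ℕ} (l : List ℕ) {s : List ℕ}
    (h : a ∉ s) : jpnPfaffian 0 X Y (a :: l) s = 0 := by
  refine pfFunctional_eq_zero (isAlt_jpnForm 0 X Y) (w := labelVec R (row a)) (l := [])
    (l' := (jpnLabels l s).map (labelVec R)) fun v hv => ?_
  obtain ⟨j, hj, rfl⟩ := List.mem_map.1 hv
  rw [jpnForm_labelVec, jpnEntry_row_zero_letters]
  rintro rfl
  simp [mem_jpnLabels, h] at hj

theorem jpnPfaffian_zero_letters_cons_right (X Y : Fin 0 → ℤ → R) {b : ℕ} {l : List ℕ}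
    (s : List ℕ) (h : b ∉ l) : jpnPfaffian 0 X Y l (b :: s) = 0 := by
  have hlabels : (jpnLabels l (b :: s)).map (labelVec R) =
      (jpnLabels l s).map (labelVec R) ++ [labelVec R (col b)] := by
    simp [jpnLabels]
  rw [jpnPfaffian, hlabels]
  refine pfFunctional_eq_zero _ fun v hv => ?_
  rw [List.append_nil] at hv
  obtain ⟨j, hj, rfl⟩ := List.mem_map.1 hv
  rw [jpnForm_labelVec, jpnEntry_col_zero_letters]
  rintro rfl
  simp [mem_jpnLabels, h] at hj

theorem jpnPfaffian_zero_letters_cons_cons (X Y : Fin 0 → ℤ → R) {a : ℕ} {l s : List ℕ}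
    (hl : a ∉ l) (hs : a ∉ s) (heven : Even (l.length + s.length)) :
    jpnPfaffian 0 X Y (a :: l) (a :: s) = jpnPfaffian 0 X Y l s := by
  set L := (jpnLabels l s).map (labelVec R) with hL
  have hlen : Even L.length := by simpa [hL, jpnLabels] using heven
  have hmove : extProd (R := R) ((jpnLabels (a :: l) (a :: s)).map (labelVec R)) =
      extProd (labelVec R (row a) :: labelVec R (col a) :: L) := by
    have : (jpnLabels (a :: l) (a :: s)).map (labelVec R) =
        labelVec R (row a) :: (L ++ [labelVec R (col a)]) := by
      simp [hL, jpnLabels]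
    rw [this, extProd_cons, extProd_append_cons, hlen.neg_one_pow, one_smul, List.append_nil,
      ← extProd_cons, ← extProd_cons]
  have hentry : ∀ v ∈ L, jpnForm 0 X Y (labelVec R (row a)) v =
      jpnForm 0 X Y (labelVec R (col a)) v := fun v hv => by
    obtain ⟨j, hj, rfl⟩ := List.mem_map.1 hv
    rw [jpnForm_labelVec, jpnForm_labelVec, jpnEntry_row_zero_letters, jpnEntry_col_zero_letters]
    all_goals
      rintro rfl
      simp [mem_jpnLabels, hl, hs] at hj
  rw [jpnPfaffian, hmove]
  refine (pfFunctional_remove_pair (isAlt_jpnForm 0 X Y) (l := []) hentry).trans ?_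
  rw [jpnForm_labelVec, jpnEntry, qRowShift_self, one_mul]
  rfl

theorem jpnPfaffian_zero_letters (X Y : Fin 0 → ℤ → R) {l s : List ℕ} (hl : l.Pairwise (· > ·))
    (hs : s.Pairwise (· > ·)) (heven : Even (l.length + s.length)) :
    jpnPfaffian 0 X Y l s = if l = s then 1 else 0 := by
  induction l generalizing s with
  | nil =>
    cases s with
    | nil => exact (pfFunctional_one _).trans (if_pos rfl).symm
    | cons b s => exact jpnPfaffian_zero_letters_cons_right X Y s List.not_mem_nil
  | cons a l ih =>
    cases s with
    | nil => exact jpnPfaffian_zero_letters_cons_left X Y l List.not_mem_nil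
    | cons b s =>
      obtain ⟨hla, hl'⟩ := List.pairwise_cons.1 hl
      obtain ⟨hsb, hs'⟩ := List.pairwise_cons.1 hs
      have hal : a ∉ l := fun h => lt_irrefl a (hla a h)
      rcases lt_trichotomy a b with hab | rfl | hab
      · have hne : a :: l ≠ b :: s := fun h => hab.ne (List.cons_eq_cons.1 h).1
        rw [if_neg hne, jpnPfaffian_zero_letters_cons_right]
        exact fun h => (List.mem_cons.1 h).elim hab.ne' fun h => hab.not_gt (hla b h)
      · have heven' : Even (l.length + s.length) := by
          simp only [List.length_cons] at heven
          grind
        rw [jpnPfaffian_zero_letters_cons_cons X Y hal (fun h => lt_irrefl a (hsb a h)) heven',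
          ih hl' hs' heven']
        exact if_congr (by simp) rfl rfl
      · have hne : a :: l ≠ b :: s := fun h => hab.ne' (List.cons_eq_cons.1 h).1
        rw [if_neg hne, jpnPfaffian_zero_letters_cons_left]
        exact fun h => (List.mem_cons.1 h).elim hab.ne' fun h => hab.not_gt (hsb a h)

theorem jpnEntry_row_zero (n : ℕ) (X Y : Fin n → ℤ → R) {l s : List ℕ} (hl : ∀ a ∈ l, 0 < a)
    (hs : ∀ b ∈ s, 0 < b) {j : JPNLabel} (hj : j ∈ jpnLabels l s) :
    jpnEntry n X Y (row 0) j = jpnEntry n X Y (col 0) j := by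
  rcases mem_jpnLabels.1 hj with ⟨a, ha, rfl⟩ | ⟨b, hb, rfl⟩
  · rw [jpnEntry, if_neg (Nat.not_lt_zero a), if_pos (hl a ha), qTwoRow_zero_right]
    rfl
  · exact qRowShift_of_lt (hs b hb) n X Y

theorem jpnForm_row_zero (n : ℕ) (X Y : Fin n → ℤ → R) {l s : List ℕ} (hl : ∀ a ∈ l, 0 < a)
    (hs : ∀ b ∈ s, 0 < b) {v : JPNLabel →₀ R}
    (hv : v ∈ (l.map row).map (labelVec R) ++ (s.map col).reverse.map (labelVec R)) :
    jpnForm n X Y (labelVec R (row 0)) v = jpnForm n X Y (labelVec R (col 0)) v := by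
  rw [← List.map_append] at hv
  obtain ⟨j, hj, rfl⟩ := List.mem_map.1 hv
  rw [jpnForm_labelVec, jpnForm_labelVec]
  exact jpnEntry_row_zero n X Y hl hs hj

theorem jpnPfaffian_append_zero_left (n : ℕ) (X Y : Fin n → ℤ → R) {l s : List ℕ}
    (hl : ∀ a ∈ l, 0 < a) (hs : ∀ b ∈ s, 0 < b) :
    jpnPfaffian n X Y (l ++ [0]) s = jpnPfaffian n X Y l (s ++ [0]) := by
  simpa [jpnPfaffian, jpnLabels] using
    pfFunctional_replace (isAlt_jpnForm n X Y) fun v => jpnForm_row_zero n X Y hl hs (v := v)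

theorem jpnPfaffian_append_zero_append_zero (n : ℕ) (X Y : Fin n → ℤ → R) {l s : List ℕ}
    (hl : ∀ a ∈ l, 0 < a) (hs : ∀ b ∈ s, 0 < b) :
    jpnPfaffian n X Y (l ++ [0]) (s ++ [0]) = jpnPfaffian n X Y l s := by
  have hentry : jpnEntry n X Y (row 0) (col 0) = 1 := qRowShift_self n 0 X Y
  simpa [jpnPfaffian, jpnLabels, jpnForm_labelVec, hentry] using
    pfFunctional_remove_pair (isAlt_jpnForm n X Y) fun v => jpnForm_row_zero n X Y hl hs (v := v)

end Labels

section Induction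

variable {R : Type*} [CommRing R]

open JPNLabel

theorem pairwise_jpnLabels {P : JPNLabel → JPNLabel → Prop} {l s : List ℕ}
    (hrow : l.Pairwise fun a b => P (row a) (row b)) (hrowcol : ∀ a b, P (row a) (col b))
    (hcol : ∀ b c, P (col b) (col c)) : (jpnLabels l s).Pairwise P := by
  refine List.pairwise_append.2 ⟨List.pairwise_map.2 hrow, ?_, fun i hi j hj => ?_⟩
  · rw [List.pairwise_reverse, List.pairwise_map]
    exact List.pairwise_of_forall fun b c => hcol c b
  · obtain ⟨a, -, rfl⟩ := List.mem_map.1 hi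
    obtain ⟨b, -, rfl⟩ := List.mem_map.1 (List.mem_reverse.1 hj)
    exact hrowcol a b

theorem jpnPfaffian_succ_eq_stepVec (n : ℕ) (X Y : Fin (n + 1) → ℤ → R) {l : List ℕ} (s : List ℕ)
    (hl : l.Pairwise fun a b => b < a ∧ 0 < b) :
    jpnPfaffian (n + 1) X Y l s =
      pfFunctional (isAlt_jpnForm n (Fin.init X) (Fin.init Y))
        (extProd ((jpnLabels l s).map (stepVec (X (Fin.last n)) (Y (Fin.last n))))) := by
  refine pfFunctional_congr _ _ _ (pairwise_jpnLabels (hl.imp fun {a b} h => ?_)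
    (fun a b => ?_) fun b c => ?_)
  · rw [jpnForm_labelVec]
    exact (jpnForm_stepRow_stepRow X Y h.2 h.1).symm
  · rw [jpnForm_labelVec]
    exact (jpnForm_stepRow_col X Y a b).symm
  · rw [jpnForm_labelVec, stepVec, stepVec, jpnForm_labelVec, jpnEntry, jpnEntry]

theorem IsStrictPartition.tail {f : ℕ → ℕ} {p : ℕ} (hf : IsStrictPartition f (p + 1)) :
    IsStrictPartition (fun i => f (i + 1)) p where
  lt i j hij hj := hf.lt (i + 1) (j + 1) (by omega) (by omega)
  pos i hi := hf.pos (i + 1) (by omega)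
  eq_zero i hi := hf.eq_zero (i + 1) (by omega)

-- In the exterior product, `stepRow_zero` changes each factor by a multiple of the next one.
theorem extProd_stepRow (x y : ℤ → R) {lam : ℕ → ℕ} {p : ℕ} (hlam : IsStrictPartition lam p) :
    extProd (R := R) (List.ofFn fun i : Fin p => stepRow x y (lam i) 0) =
      extProd (List.ofFn fun i : Fin p => stepRow x y (lam i) (lam (i + 1))) := by
  induction p generalizing lam with
  | zero => rfl
  | succ p ih =>
    have htail := ih hlam.tail
    simp only [List.ofFn_succ, extProd_cons, Fin.val_succ, Fin.val_zero, ← htail]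
    cases p with
    | zero => rw [hlam.eq_zero (0 + 1) le_rfl]
    | succ p =>
      rw [List.ofFn_succ, extProd_cons, stepRow_zero x y (hlam.pos (0 + 1) (by omega))
        (hlam.lt 0 (0 + 1) (by omega) (by omega)), map_add, map_smul, add_mul, smul_mul_assoc,
        Fin.val_zero, ← mul_assoc (ExteriorAlgebra.ι R (stepRow x y (lam (0 + 1)) 0)),
        ExteriorAlgebra.ι_sq_zero, zero_mul, smul_zero, add_zero]

theorem extProd_ofFn {M : Type*} [AddCommGroup M] [Module R M] {p : ℕ} (v : Fin p → M) :
    extProd (List.ofFn v) = ExteriorAlgebra.ιMulti R p v := by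
  rw [ExteriorAlgebra.ιMulti_apply, extProd, List.map_ofFn]
  rfl

theorem extProd_stepRow_eq_sum (x y : ℤ → R) (lam : ℕ → ℕ) (p : ℕ) :
    extProd (R := R) (List.ofFn fun i : Fin p => stepRow x y (lam i) (lam (i + 1))) =
      ∑ ν ∈ interlacing p lam, (∏ i : Fin p, stepCoeff x y (lam i) (lam (i + 1)) (ν i)) •
        extProd (List.ofFn fun i => labelVec R (row (ν i))) := by
  simp only [extProd_ofFn, stepRow, ← AlternatingMap.coe_multilinearMap,
    ← MultilinearMap.map_smul_univ]
  exact MultilinearMap.map_sum_finset _ _ _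

theorem map_jpnLabels {M : Type*} (u : JPNLabel → M) (l s : List ℕ) :
    (jpnLabels l s).map u = l.map (fun a => u (row a)) ++ (s.map fun b => u (col b)).reverse := by
  simp [jpnLabels, Function.comp_def]

theorem jpnPfaffian_succ (n : ℕ) (X Y : Fin (n + 1) → ℤ → R) {lam : ℕ → ℕ} {p : ℕ} (s : List ℕ)
    (hlam : IsStrictPartition lam p) :
    jpnPfaffian (n + 1) X Y (List.ofFn fun i : Fin p => lam i) s =
      ∑ ν ∈ interlacing p lam,
        (∏ i : Fin p,
          stepCoeff (X (Fin.last n)) (Y (Fin.last n)) (lam i) (lam (i + 1)) (ν i)) *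
            jpnPfaffian n (Fin.init X) (Fin.init Y) (List.ofFn ν) s := by
  have hpair : (List.ofFn fun i : Fin p => lam i).Pairwise fun a b => b < a ∧ 0 < b :=
    List.pairwise_ofFn.2 fun i j hij => ⟨hlam.lt i j hij j.2, hlam.pos j j.2⟩
  rw [jpnPfaffian_succ_eq_stepVec n X Y s hpair]
  simp only [jpnPfaffian, map_jpnLabels, extProd_append, List.map_ofFn, Function.comp_def]
  simp only [stepVec, extProd_stepRow _ _ hlam, extProd_stepRow_eq_sum, Finset.sum_mul, map_sum,
    smul_mul_assoc, map_smul, smul_eq_mul]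

theorem jpnPfaffian_eq_zero_of_not_injective (n : ℕ) (X Y : Fin n → ℤ → R) {p : ℕ} {ν : Fin p → ℕ}
    (s : List ℕ) (hν : ¬Function.Injective ν) : jpnPfaffian n X Y (List.ofFn ν) s = 0 := by
  have hvec : ¬Function.Injective fun i => labelVec R (row (ν i)) := fun h =>
    hν fun i j hij => h (congrArg (fun a => labelVec R (row a)) hij)
  rw [jpnPfaffian, map_jpnLabels, extProd_append, List.map_ofFn, Function.comp_def, extProd_ofFn,
    AlternatingMap.map_eq_zero_of_not_injective _ _ hvec, zero_mul, map_zero]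

theorem strictAnti_of_mem_interlacing {p : ℕ} {lam : ℕ → ℕ} {ν : Fin p → ℕ}
    (h : ν ∈ interlacing p lam) (hν : Function.Injective ν) : StrictAnti ν := by
  cases p with
  | zero => exact Subsingleton.strictAnti ν
  | succ p =>
    refine Fin.strictAnti_iff_succ_lt.2 fun i => lt_of_le_of_ne ?_ (hν.ne i.castSucc_lt_succ.ne')
    rw [mem_interlacing] at h
    exact (h i.succ).2.trans (h i.castSucc).1

theorem jpnPfaffian_ofFn_of_last_eq_zero (n : ℕ) (X Y : Fin n → ℤ → R) {p q m : ℕ}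
    {ν : Fin (p + 1) → ℕ} {mu : ℕ → ℕ} (hν : StrictAnti ν) (hlast : ν (Fin.last p) = 0)
    (hmu : IsStrictPartition mu q) (hqm : q ≤ m) (hmq : m ≤ q + 1) :
    jpnPfaffian n X Y (List.ofFn ν) (List.ofFn fun i : Fin m => mu i) =
      jpnPfaffian n X Y (List.ofFn (Fin.init ν))
        (List.ofFn fun i : Fin (2 * q + 1 - m) => mu i) := by
  have hνlist : List.ofFn ν = List.ofFn (Fin.init ν) ++ [0] := by
    rw [List.ofFn_succ', List.concat_eq_append, hlast]
    rfl
  have hmulist : (List.ofFn fun i : Fin (q + 1) => mu i) =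
      (List.ofFn fun i : Fin q => mu i) ++ [0] := by
    rw [List.ofFn_succ', List.concat_eq_append, Fin.val_last, hmu.eq_zero q le_rfl]
    rfl
  have hνpos : ∀ a ∈ List.ofFn (Fin.init ν), 0 < a :=
    List.forall_mem_ofFn_iff.2 fun i => hlast.symm.trans_lt (hν i.castSucc_lt_last)
  have hmupos : ∀ b ∈ List.ofFn fun i : Fin q => mu i, 0 < b :=
    List.forall_mem_ofFn_iff.2 fun i => hmu.pos i i.2
  obtain rfl | rfl : m = q ∨ m = q + 1 := by omega
  · rw [show 2 * m + 1 - m = m + 1 by omega, hνlist, hmulist,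
      jpnPfaffian_append_zero_left n X Y hνpos hmupos]
  · rw [show 2 * q + 1 - (q + 1) = q by omega, hνlist, hmulist,
      jpnPfaffian_append_zero_append_zero n X Y hνpos hmupos]

theorem IsStrictPartition.length_unique {f : ℕ → ℕ} {p q : ℕ} (hp : IsStrictPartition f p)
    (hq : IsStrictPartition f q) : p = q := by
  by_contra hne
  rcases Nat.lt_or_gt_of_ne hne with h | h
  · exact (hq.pos p h).ne' (hp.eq_zero p le_rfl)
  · exact (hp.pos q h).ne' (hq.eq_zero q le_rfl)

theorem jpnPfaffian_zero_letters_eq_skewQ {p q m : ℕ} {lam mu : ℕ → ℕ}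
    (hlam : IsStrictPartition lam p) (hmu : IsStrictPartition mu q) (hqm : q ≤ m) (hmq : m ≤ q + 1)
    (heven : Even (p + m)) (X Y : Fin 0 → ℤ → R) :
    jpnPfaffian 0 X Y (List.ofFn fun i : Fin p => lam i) (List.ofFn fun i : Fin m => mu i) =
      skewQ 0 lam mu p X Y := by
  have hlampair : (List.ofFn fun i : Fin p => lam i).Pairwise (· > ·) :=
    List.pairwise_ofFn.2 fun i j hij => hlam.lt i j hij j.2
  have hmupair : (List.ofFn fun i : Fin m => mu i).Pairwise (· > ·) :=
    List.pairwise_ofFn.2 fun i j hij => (lt_or_ge (j : ℕ) q).elim (hmu.lt i j hij) fun h =>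
      (hmu.eq_zero j h).trans_lt (hmu.pos i (by omega))
  rw [jpnPfaffian_zero_letters X Y hlampair hmupair (by simpa using heven),
    skewQ_zero hlam.antitone hlam.eq_zero]
  refine if_congr ⟨fun h => ?_, fun h => ?_⟩ rfl rfl
  · obtain rfl : p = m := by simpa using congrArg List.length h
    funext i
    rcases lt_or_ge i p with hi | hi
    · exact congrFun (List.ofFn_injective h) ⟨i, hi⟩
    · rw [hlam.eq_zero i hi, hmu.eq_zero i (hqm.trans hi)]
  · subst h
    obtain rfl := hlam.length_unique hmu
    obtain rfl : m = p := by grind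
    rfl

theorem jpnPfaffian_eq_skewQ {n p q m : ℕ} {lam mu : ℕ → ℕ} (hlam : IsStrictPartition lam p)
    (hmu : IsStrictPartition mu q) (hqm : q ≤ m) (hmq : m ≤ q + 1) (heven : Even (p + m))
    (X Y : Fin n → ℤ → R) :
    jpnPfaffian n X Y (List.ofFn fun i : Fin p => lam i) (List.ofFn fun i : Fin m => mu i) =
      skewQ n lam mu p X Y := by
  induction n generalizing p m lam with
  | zero => exact jpnPfaffian_zero_letters_eq_skewQ hlam hmu hqm hmq heven X Y
  | succ n ih =>
    have ih_of_pos {p m : ℕ} {ν : Fin p → ℕ} (hν : StrictAnti ν) (hpos : ∀ i, 0 < ν i)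
        (hqm : q ≤ m) (hmq : m ≤ q + 1) (heven : Even (p + m)) :
        jpnPfaffian n (Fin.init X) (Fin.init Y) (List.ofFn ν) (List.ofFn fun i : Fin m => mu i) =
          skewQ n (zeroExtend ν) mu p (Fin.init X) (Fin.init Y) := by
      simpa only [zeroExtend_of_lt] using ih (isStrictPartition_zeroExtend hν hpos) hqm hmq heven
        (Fin.init X) (Fin.init Y)
    rw [jpnPfaffian_succ n X Y _ hlam, skewQ_succ hlam hmu, Finset.sum_filter]
    refine Finset.sum_congr rfl fun ν hν => ?_
    split_ifs with hstrict
    · congr 1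
      by_cases hpos : ∀ i, 0 < ν i
      · exact ih_of_pos hstrict hpos hqm hmq heven
      obtain ⟨i, hi⟩ := not_forall.1 hpos
      obtain _ | p := p
      · exact i.elim0
      have hlast : ν (Fin.last p) = 0 :=
        Nat.eq_zero_of_not_pos fun h => hi (h.trans_le (hstrict.antitone i.le_last))
      have hinit : StrictAnti (Fin.init ν) := hstrict.comp_strictMono Fin.strictMono_castSucc
      have hinitpos (j : Fin p) : 0 < Fin.init ν j :=
        hlast.symm.trans_lt (hstrict j.castSucc_lt_last)
      rw [jpnPfaffian_ofFn_of_last_eq_zero n _ _ hstrict hlast hmu hqm hmq,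
        ih_of_pos hinit hinitpos (by omega) (by omega) (by grind),
        zeroExtend_succ_of_last_eq_zero hlast, skewQ_succ_of_eq_zero (antitone_zeroExtend hinit)
          (zeroExtend_of_le _ le_rfl)]
    · rw [jpnPfaffian_eq_zero_of_not_injective n _ _ _
        (hstrict ∘ strictAnti_of_mem_interlacing hν), mul_zero]

end Induction

section Matrix

variable {R : Type*} [CommRing R]

open JPNLabel

/-- The Józefiak–Pragacz–Nimmo matrix: `l` rows for the parts of `lam`, followed by `N - l` rows for
the first `q` parts of `mu` in reverse order. -/
noncomputable def jpnMatrix (n N l q : ℕ) (lam mu : ℕ → ℕ) (X Y : Fin n → ℤ → R) :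
    Matrix (Fin N) (Fin N) R :=
  Matrix.of fun i j =>
    if (i : ℕ) < l then
      if (j : ℕ) < l then
        if (i : ℕ) < j then qTwoRow n (lam i) (lam j) X Y
        else if (i : ℕ) = j then 0
        else -qTwoRow n (lam j) (lam i) X Y
      else qRowShift n ((lam i : ℤ) - mu (q - 1 - (j - l))) (mu (q - 1 - (j - l))) X Y
    else
      if (j : ℕ) < l then
        -qRowShift n ((lam j : ℤ) - mu (q - 1 - (i - l))) (mu (q - 1 - (i - l))) X Y
      else 0

/-- The label of row `i` of a Józefiak–Pragacz–Nimmo matrix of size `N` whose outer partition has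
`p` parts; the inner one is padded to `N - p` parts. -/
def jpnLabel {N : ℕ} (p : ℕ) (lam mu : ℕ → ℕ) (i : Fin N) : JPNLabel :=
  if i < p then row (lam i) else col (mu (N - 1 - i))

theorem ofFn_jpnLabel {N p m : ℕ} (hN : N = p + m) (lam mu : ℕ → ℕ) :
    List.ofFn (fun i : Fin N => jpnLabel p lam mu i) =
      jpnLabels (List.ofFn fun i : Fin p => lam i) (List.ofFn fun i : Fin m => mu i) := by
  refine List.ext_getElem (by simp [jpnLabels, hN]) fun i h _ => ?_
  rw [List.length_ofFn] at h
  simp only [List.getElem_ofFn, jpnLabels, jpnLabel, List.getElem_append, List.length_map,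
    List.length_ofFn, List.getElem_map, List.getElem_reverse]
  split_ifs
  · rfl
  · congr 2
    omega

theorem jpnMatrix_apply_of_lt {n N p q : ℕ} {lam mu : ℕ → ℕ} (hlam : IsStrictPartition lam p)
    (hmu : IsStrictPartition mu q) (hN : p + q ≤ N) (hN' : N ≤ p + q + 1) (X Y : Fin n → ℤ → R)
    {i j : Fin N} (hij : i < j) :
    jpnMatrix n N (N - q) q lam mu X Y i j =
      jpnEntry n X Y (jpnLabel p lam mu i) (jpnLabel p lam mu j) := by
  have hij : (i : ℕ) < j := hij
  have hindex (k : Fin N) (hk : N - q ≤ k) : q - 1 - (k - (N - q)) = N - 1 - k := by omega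
  simp only [jpnMatrix, Matrix.of_apply, jpnLabel]
  rcases lt_or_ge (j : ℕ) p with hj | hj
  · have hi := hij.trans hj
    rw [if_pos (by omega), if_pos (by omega), if_pos hij, if_pos hi, if_pos hj, jpnEntry,
      if_pos (hlam.lt i j hij hj)]
  rw [if_neg hj.not_gt]
  rcases lt_or_ge (j : ℕ) (N - q) with hj' | hj'
  · have hjzero : lam j = 0 := hlam.eq_zero j hj
    have hmuzero : mu (N - 1 - j) = 0 := hmu.eq_zero _ (by omega)
    rw [if_pos (by omega), if_pos hj', if_pos hij, if_pos (by omega), hjzero, hmuzero,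
      qTwoRow_zero_right, jpnEntry]
  rw [if_neg hj'.not_gt, if_neg hj'.not_gt, hindex j hj']
  rcases lt_or_ge (i : ℕ) p with hi | hi
  · rw [if_pos (by omega), if_pos hi, jpnEntry]
  rw [if_neg hi.not_gt, jpnEntry]
  split_ifs
  · rw [hlam.eq_zero i hi]
    exact qRowShift_of_lt (hmu.pos _ (by omega)) n X Y
  · rfl

theorem QGen_JPN_pfaffian_general (n p q : ℕ) {lam mu : ℕ → ℕ} (hlam : IsStrictPartition lam p)
    (hmu : IsStrictPartition mu q) (X Y : Fin n → ℤ → R) :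
    skewQ n lam mu p X Y =
      pfaffian (m := (p + q + 1) / 2)
        (jpnMatrix n _ (2 * ((p + q + 1) / 2) - q) q lam mu X Y) := by
  obtain ⟨m, hm⟩ : ∃ m, 2 * ((p + q + 1) / 2) = p + m := ⟨2 * ((p + q + 1) / 2) - p, by omega⟩
  let v (i : Fin (2 * ((p + q + 1) / 2))) : JPNLabel →₀ R := labelVec R (jpnLabel p lam mu i)
  have hv : List.ofFn v = (jpnLabels (List.ofFn fun i : Fin p => lam i)
      (List.ofFn fun i : Fin m => mu i)).map (labelVec R) := by
    rw [← ofFn_jpnLabel hm, List.map_ofFn, Function.comp_def]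
  have heven : Even (p + m) := hm ▸ even_two_mul _
  calc skewQ n lam mu p X Y
      = jpnPfaffian n X Y (List.ofFn fun i : Fin p => lam i) (List.ofFn fun i : Fin m => mu i) :=
        (jpnPfaffian_eq_skewQ hlam hmu (by omega) (by omega) heven X Y).symm
    _ = pfaffian (Matrix.of fun i j => jpnForm n X Y (v i) (v j)) := by
        rw [pfaffian_eq_pfFunctional (isAlt_jpnForm n X Y), hv, jpnPfaffian]
    _ = pfaffian (jpnMatrix n _ _ q lam mu X Y) := pfaffian_congr fun i j hij => by
        rw [jpnMatrix_apply_of_lt hlam hmu (by omega) (by omega) X Y hij, Matrix.of_apply,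
          jpnForm_labelVec]

end Matrix

/-- **Józefiak–Pragacz–Nimmo type Pfaffian identity for ninth variation skew
Q-functions.**  For strict partitions `μ ⊆ λ` of lengths `q ≤ p`, with
`N = p + q` rounded up to an even number and `l = N - q` (so `l = p` or `p+1`
according to the parity of `p + q`, augmenting `λ` with a trailing zero part),
`Q_{λ/μ}(X,Y)` equals the Pfaffian of the antisymmetric block matrix with
upper-left entries `Q_{(λ_i,λ_j)}(X,Y)`, upper-right entries
`Q_{(λ_i - μ_{q-k+1})}(τ^{μ_{q-k+1}}(X,Y))` (column `k = 1,…,q`), lower-left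
the negative transpose of the upper-right, and zero lower-right block. -/
theorem QGen_JPN_pfaffian {R : Type*} [CommRing R] (n p q : ℕ) (lam mu : ℕ → ℕ)
    (hlam : ∀ i j, i < j → j < p → lam j < lam i) (hlampos : ∀ i, i < p → 0 < lam i)
    (hlamlen : ∀ i, p ≤ i → lam i = 0)
    (hmu : ∀ i j, i < j → j < q → mu j < mu i) (hmupos : ∀ i, i < q → 0 < mu i)
    (hmulen : ∀ i, q ≤ i → mu i = 0) (hqp : q ≤ p) (hsub : ∀ i, mu i ≤ lam i)
    (X Y : Fin n → ℤ → R) :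
    QGen n (shiftedCells lam mu p) X Y =
      pfaffian (m := (p + q + 1) / 2) (Matrix.of fun i j =>
        if (i : ℕ) < 2 * ((p + q + 1) / 2) - q then
          (if (j : ℕ) < 2 * ((p + q + 1) / 2) - q then
            (if (i : ℕ) < (j : ℕ) then qTwoRow n (lam (i : ℕ)) (lam (j : ℕ)) X Y
             else if (i : ℕ) = (j : ℕ) then 0
             else - qTwoRow n (lam (j : ℕ)) (lam (i : ℕ)) X Y)
          else
            qRowShift n
              ((lam (i : ℕ) : ℤ) - mu (q - 1 - ((j : ℕ) - (2 * ((p + q + 1) / 2) - q))))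
              ((mu (q - 1 - ((j : ℕ) - (2 * ((p + q + 1) / 2) - q))) : ℤ)) X Y)
        else
          (if (j : ℕ) < 2 * ((p + q + 1) / 2) - q then
            - qRowShift n
                ((lam (j : ℕ) : ℤ) - mu (q - 1 - ((i : ℕ) - (2 * ((p + q + 1) / 2) - q))))
                ((mu (q - 1 - ((i : ℕ) - (2 * ((p + q + 1) / 2) - q))) : ℤ)) X Y
          else 0)) := by
  exact (if_pos hsub).symm.trans
    (QGen_JPN_pfaffian_general n p q ⟨hlam, hlampos, hlamlen⟩ ⟨hmu, hmupos, hmulen⟩ X Y)
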